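/- Let Δ be a Fano simplex of dimension d ≥ 2 and Gorenstein index g ≥ 1 with (d,g) not among (3,1), (3,2), (4,1). Then mult(Δ) ≤ 3·t_{g,d−1}²/g. If equality holds, then either (d,g) = (3,3) and Δ ≅ Δ(P) where P is the 3×4 matrix with columns (1,0,0), (1,12,0), (5,0,12), (−7,−12,−12), or there exist positive integers a₁,…,a_{d−1} such that Δ ≅ Δ(P) where P is the d×(d+1) matrix whose first d−2 columns are the standard basis vectors e₁,…,e_{d−2}, whose (d−1)-st column v has entries v_k = ((s_{g,k}−g)/s_{g,k})·(t_{g,d−1}/g) for k = 1,…,d−2, v_{d−1} = t_{g,d−1}/g, v_d = 0, whose d-th column is (a₁,…,a_{d−1}, 3t_{g,d−1}), and whose last column w has entries w_k = −(((s_{g,k}+2g)/s_{g,k})·(t_{g,d−1}/g) + a_k) for k = 1,…,d−2, w_{d−1} = −(t_{g,d−1}/g + a_{d−1}), w_d = −3t_{g,d−1}. Moreover, if g is odd, then choosing a_k = ((s_{g,k}−g)/s_{g,k})·(t_{g,d−1}/g) for k = 1,…,d−2 and a_{d−1} = t_{g,d−1}/g yields a Fano simplex of dimension d and Gorenstein index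 g attaining the bound. -/

import Mathlib

open Finset Pointwise

/-- Cast an integer vector to a rational vector. -/
def toQ {d : ℕ} (v : Fin d → ℤ) : Fin d → ℚ := fun j => (v j : ℚ)

/-- An integer vector is primitive if the gcd of its entries is 1. -/
def IsPrimitive {d : ℕ} (v : Fin d → ℤ) : Prop := Finset.univ.gcd v = 1

/-- The origin lies in the interior of the simplex with the given vertices,
i.e. the origin is a convex combination of the vertices with positive coefficients. -/
def OriginInInterior {d : ℕ} (v : Fin (d + 1) → Fin d → ℚ) : Prop :=
  ∃ w : Fin (d + 1) → ℚ, (∀ i, 0 < w i) ∧ ∑ i, w i = 1 ∧ ∀ j, ∑ i, w i * v i j = 0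

/-- A Fano simplex, given by its tuple of vertices: the vertices are primitive integer
vectors, affinely independent, and the origin lies in the interior. -/
def IsFanoSimplex {d : ℕ} (v : Fin (d + 1) → Fin d → ℤ) : Prop :=
  AffineIndependent ℚ (fun i => toQ (v i)) ∧ (∀ i, IsPrimitive (v i)) ∧
    OriginInInterior fun i => toQ (v i)

/-- The simplex spanned by the given vertices. -/
def simplexHull {d : ℕ} (v : Fin (d + 1) → Fin d → ℚ) : Set (Fin d → ℚ) :=
  convexHull ℚ (Set.range v)

/-- The dual body `Δ* = {u : ⟨u,v⟩ ≥ -1 for all v ∈ Δ}`. -/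
def dualBody {d : ℕ} (S : Set (Fin d → ℚ)) : Set (Fin d → ℚ) :=
  {u | ∀ x ∈ S, -1 ≤ ∑ j, u j * x j}

/-- A set is a lattice polytope iff it is the convex hull of its integral points
(equivalently, all its vertices are lattice points). -/
def IsLatticeSet {d : ℕ} (S : Set (Fin d → ℚ)) : Prop :=
  S = convexHull ℚ {x ∈ S | ∀ j, ∃ z : ℤ, x j = (z : ℚ)}

/-- The Gorenstein index: the least positive integer `g` such that `g • Δ*` is a
lattice polytope. -/
noncomputable def gorensteinIndex {d : ℕ} (v : Fin (d + 1) → Fin d → ℚ) : ℕ :=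
  sInf {g : ℕ | 0 < g ∧ IsLatticeSet ((g : ℚ) • dualBody (simplexHull v))}

/-- The normalized volume `d! · vol(Δ)` of the simplex with the given vertices. -/
def normVol {d : ℕ} (v : Fin (d + 1) → Fin d → ℚ) : ℚ :=
  |(Matrix.of fun i j : Fin d => v i.succ j - v 0 j).det|

/-- Two (Fano) simplices, given by their vertex tuples, are isomorphic iff some
unimodular integer matrix maps the vertex set of one onto the vertex set of the other. -/
def IsIsomorphicTo {d : ℕ} (v w : Fin (d + 1) → Fin d → ℤ) : Prop :=
  ∃ (U : Matrix (Fin d) (Fin d) ℤ) (σ : Equiv.Perm (Fin (d + 1))),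
    IsUnit U.det ∧ ∀ i, U.mulVec (v i) = w (σ i)


/-- The multiplicity of a Fano simplex: the index in `ℤ^d` of the sublattice
generated by the vertices. -/
noncomputable def multOf {d : ℕ} (v : Fin (d + 1) → Fin d → ℤ) : ℕ :=
  (AddSubgroup.closure (Set.range v)).index

/-- Isomorphism onto a simplex given by a rational vertex matrix: a unimodular
integer matrix maps the vertex set of `v` onto the columns of `w`. -/
def IsIsomorphicToQ {d : ℕ} (v : Fin (d + 1) → Fin d → ℤ)
    (w : Fin (d + 1) → Fin d → ℚ) : Prop :=
  ∃ (U : Matrix (Fin d) (Fin d) ℤ) (σ : Equiv.Perm (Fin (d + 1))),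
    IsUnit U.det ∧ ∀ i, (U.map (Int.cast : ℤ → ℚ)).mulVec (toQ (v i)) = w (σ i)

/-- The `g`-Sylvester sequence: `s_{g,1} = g+1`, `s_{g,k+1} = s_{g,k}(s_{g,k}-1)+1`.
(The value at `0` is junk and never used.) -/
def sylv (g : ℕ) : ℕ → ℕ
  | 0 => 0
  | 1 => g + 1
  | k + 2 => sylv g (k + 1) * (sylv g (k + 1) - 1) + 1

/-- The truncated `g`-Sylvester sequence `t_{g,k} = s_{g,k} - 1`. -/
def tsylv (g k : ℕ) : ℕ := sylv g k - 1

/-- The exceptional 3×4 vertex matrix for `(d,g) = (3,3)` with columns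
(1,0,0), (1,12,0), (5,0,12), (-7,-12,-12), written for general `d`. -/
def Pexc33 (d : ℕ) : Fin (d + 1) → Fin d → ℚ := fun i j =>
  if i.val = 0 then (if j.val = 0 then 1 else 0)
  else if i.val = 1 then (if j.val = 0 then 1 else if j.val = 1 then 12 else 0)
  else if i.val = 2 then (if j.val = 0 then 5 else if j.val = 2 then 12 else 0)
  else (if j.val = 0 then -7 else -12)

/-- The general extremal `d×(d+1)` vertex matrix for the multiplicity bound:
the first `d-2` columns are `e_1,…,e_{d-2}`; the `(d-1)`-st column has entries
`((s_{g,k}-g)/s_{g,k})·(t_{g,d-1}/g)` for `k = 1,…,d-2`, then `t_{g,d-1}/g`, then `0`;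
the `d`-th column is `(a_1,…,a_{d-1}, 3 t_{g,d-1})`; the last column has entries
`-(((s_{g,k}+2g)/s_{g,k})·(t_{g,d-1}/g) + a_k)` for `k = 1,…,d-2`, then
`-(t_{g,d-1}/g + a_{d-1})`, then `-3 t_{g,d-1}`. -/
def PgenMult (g d : ℕ) (a : ℕ → ℚ) : Fin (d + 1) → Fin d → ℚ := fun i j =>
  if i.val < d - 2 then (if j.val = i.val then 1 else 0)
  else if i.val = d - 2 then
    (if j.val < d - 2 then
      ((sylv g (j.val + 1) : ℚ) - (g : ℚ)) / (sylv g (j.val + 1) : ℚ) *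
        ((tsylv g (d - 1) : ℚ) / (g : ℚ))
    else if j.val = d - 2 then (tsylv g (d - 1) : ℚ) / (g : ℚ)
    else 0)
  else if i.val = d - 1 then
    (if j.val < d - 1 then a (j.val + 1) else 3 * (tsylv g (d - 1) : ℚ))
  else
    (if j.val < d - 2 then
      -(((sylv g (j.val + 1) : ℚ) + 2 * (g : ℚ)) / (sylv g (j.val + 1) : ℚ) *
          ((tsylv g (d - 1) : ℚ) / (g : ℚ)) + a (j.val + 1))
    else if j.val = d - 2 then -((tsylv g (d - 1) : ℚ) / (g : ℚ) + a (d - 1))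
    else -(3 * (tsylv g (d - 1) : ℚ)))

/-- The special choice of `a_1,…,a_{d-1}` available for odd `g`:
`a_k = ((s_{g,k}-g)/s_{g,k})·(t_{g,d-1}/g)` for `k = 1,…,d-2` and
`a_{d-1} = t_{g,d-1}/g`. -/
def aSpec (g d : ℕ) : ℕ → ℚ := fun k =>
  if k ≤ d - 2 then
    ((sylv g k : ℚ) - (g : ℚ)) / (sylv g k : ℚ) * ((tsylv g (d - 1) : ℚ) / (g : ℚ))
  else (tsylv g (d - 1) : ℚ) / (g : ℚ)


theorem ts_one (g : ℕ) : tsylv g 1 = g := by simp [tsylv, sylv]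

theorem ts_sylv (g k : ℕ) : sylv g (k + 1) = tsylv g (k + 1) + 1 := by
  cases k with
  | zero => simp [tsylv, sylv]
  | succ k => simp [tsylv, sylv]

theorem ts_succ (g k : ℕ) : tsylv g (k + 2) = tsylv g (k + 1) * (tsylv g (k + 1) + 1) := by
  have h : sylv g (k + 2) = sylv g (k + 1) * (sylv g (k + 1) - 1) + 1 := by simp [sylv]
  have h2 := ts_sylv g k
  have h3 := ts_sylv g (k + 1)
  rw [h3, h2] at h
  simp only [Nat.add_sub_cancel] at h
  have : k + 1 + 1 = k + 2 := rfl
  rw [this] at h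
  linarith [Nat.mul_comm (tsylv g (k + 1) + 1) (tsylv g (k + 1))]

theorem ts_pos (g : ℕ) (hg : 1 ≤ g) (k : ℕ) : 1 ≤ tsylv g (k + 1) := by
  induction k with
  | zero => rw [ts_one]; exact hg
  | succ k ih => rw [ts_succ]; nlinarith

/-- real version of the truncated sequence, shifted -/
noncomputable def TT (g k : ℕ) : ℝ := (tsylv g (k + 1) : ℝ)

theorem TT_zero (g : ℕ) : TT g 0 = g := by simp [TT, ts_one]
theorem TT_succ (g k : ℕ) : TT g (k + 1) = TT g k * (TT g k + 1) := by
  simp [TT, ts_succ]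
theorem TT_one_le (g : ℕ) (hg : 1 ≤ g) (k : ℕ) : 1 ≤ TT g k := by
  unfold TT; exact_mod_cast ts_pos g hg k

theorem TT_sum (g : ℕ) (hg : 1 ≤ g) (k : ℕ) :
    ∑ i ∈ range k, 1 / (TT g i + 1) = 1 / (g : ℝ) - 1 / TT g k := by
  induction k with
  | zero => simp [TT_zero]
  | succ k ih =>
    have h := TT_one_le g hg k
    rw [Finset.sum_range_succ, ih, TT_succ]
    field_simp
    ring

theorem TT_prod (g : ℕ) (hg : 1 ≤ g) (k : ℕ) :
    ∏ i ∈ range k, (TT g i + 1) = TT g k / g := by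
  have : (0:ℝ) < g := by exact_mod_cast hg
  induction k with
  | zero => simp [TT_zero]; field_simp
  | succ k ih =>
    rw [Finset.prod_range_succ, ih, TT_succ]
    field_simp

theorem abel_bound (x y : ℕ → ℝ) (k : ℕ) (hx : ∀ i ≤ k, 0 < x i)
    (hmono : ∀ i < k, x (i + 1) ≤ x i)
    (hD : ∀ j ≤ k, 0 ≤ ∑ i ∈ range j, (y i - x i)) :
    ∑ i ∈ range (k + 1), (y i / x i - 1) ≤ (∑ i ∈ range (k + 1), (y i - x i)) / x k := by
  induction k with
  | zero =>
    have := hx 0 le_rfl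
    simp only [zero_add, Finset.sum_range_one]
    rw [sub_div, div_self this.ne']
  | succ k ih =>
    have h1 := ih (fun i hi => hx i (by omega)) (fun i hi => hmono i (by omega))
      (fun j hj => hD j (by omega))
    have p1 := hx k (by omega)
    have p2 := hx (k + 1) le_rfl
    rw [Finset.sum_range_succ, Finset.sum_range_succ (fun i => y i - x i) (k + 1), add_div]
    have h2 : (∑ i ∈ range (k + 1), (y i - x i)) / x k
        ≤ (∑ i ∈ range (k + 1), (y i - x i)) / x (k + 1) :=
      div_le_div_of_nonneg_left (hD (k + 1) le_rfl) p2 (hmono k (by omega))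
    have h3 : (y (k + 1) - x (k + 1)) / x (k + 1) = y (k + 1) / x (k + 1) - 1 := by
      rw [sub_div, div_self p2.ne']
    linarith

theorem prod_le_exp_sum (z : ℕ → ℝ) (k : ℕ) (hz : ∀ i < k, 0 < z i) :
    ∏ i ∈ range k, z i ≤ Real.exp (∑ i ∈ range k, (z i - 1)) := by
  rw [Real.exp_sum]
  apply Finset.prod_le_prod
  · intro i hi; exact (hz i (by simpa using hi)).le
  · intro i hi
    have := Real.add_one_le_exp (z i - 1)
    linarith

theorem prod_lt_exp_sum (z : ℕ → ℝ) (k : ℕ) (hz : ∀ i < k, 0 < z i)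
    (hne : ∃ i < k, z i ≠ 1) :
    ∏ i ∈ range k, z i < Real.exp (∑ i ∈ range k, (z i - 1)) := by
  rw [Real.exp_sum]
  obtain ⟨i, hi, hne⟩ := hne
  apply Finset.prod_lt_prod
  · intro i hi; exact (hz i (by simpa using hi))
  · intro i hi
    have := Real.add_one_le_exp (z i - 1)
    linarith
  · refine ⟨i, by simpa using hi, ?_⟩
    have := Real.add_one_lt_exp (x := z i - 1) (by intro h; apply hne; linarith)
    linarith

/-- remainder -/
noncomputable def rr (A : ℕ → ℕ) (g k : ℕ) : ℝ := 1 / (g : ℝ) - ∑ i ∈ range k, 1 / (A i : ℝ)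

theorem rr_succ (A : ℕ → ℕ) (g k : ℕ) : rr A g (k + 1) = rr A g k - 1 / (A k : ℝ) := by
  simp only [rr, Finset.sum_range_succ]; ring

theorem rr_lower (A : ℕ → ℕ) (g k : ℕ) (hg : 1 ≤ g) (hA : ∀ i < k, 1 ≤ A i) (hr : 0 < rr A g k) :
    1 / ((g : ℝ) * ∏ i ∈ range k, (A i : ℝ)) ≤ rr A g k := by
  have hgp : (0:ℝ) < g := by exact_mod_cast hg
  have hpp : (0:ℝ) < ∏ i ∈ range k, (A i : ℝ) := by
    apply Finset.prod_pos; intro i hi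
    have := hA i (by simpa using hi)
    exact_mod_cast this
  have key : ∃ z : ℤ, rr A g k * ((g : ℝ) * ∏ i ∈ range k, (A i : ℝ)) = z := by
    clear hr hpp
    induction k with
    | zero => refine ⟨1, ?_⟩; simp [rr]; field_simp
    | succ k ih =>
      obtain ⟨z, hz⟩ := ih (fun i hi => hA i (by omega))
      have hk : (0:ℝ) < A k := by exact_mod_cast hA k (by omega)
      refine ⟨z * A k - g * ∏ i ∈ range k, (A i : ℤ), ?_⟩
      rw [rr_succ, Finset.prod_range_succ]
      push_cast
      rw [← hz]
      field_simp
  obtain ⟨z, hz⟩ := key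
  have hz0 : (0:ℝ) < z := by rw [← hz]; positivity
  have hz1 : (1:ℝ) ≤ z := by
    have : 0 < z := by exact_mod_cast hz0
    exact_mod_cast this
  rw [div_le_iff₀ (by positivity), hz]; exact hz1

theorem DD_eq (A : ℕ → ℕ) (g k : ℕ) (hg : 1 ≤ g) :
    ∑ i ∈ range k, (1 / (TT g i + 1) - 1 / (A i : ℝ)) = rr A g k - 1 / TT g k := by
  rw [Finset.sum_sub_distrib, TT_sum g hg, rr]; ring

/-- Curtiss type bound. -/
theorem curtiss (A : ℕ → ℕ) (g n : ℕ) (hg : 1 ≤ g) (hA : ∀ i < n, 1 ≤ A i)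
    (hmono : ∀ i, i + 1 < n → A i ≤ A (i + 1)) (hr : ∀ k ≤ n, 0 < rr A g k) :
    ∀ k ≤ n, 1 / TT g k ≤ rr A g k := by
  intro k
  induction k using Nat.strong_induction_on with
  | _ k ih =>
    intro hk
    rcases k with _ | k
    · simp [rr, TT_zero]
    by_contra hlt
    push Not at hlt
    have hgp : (0:ℝ) < g := by exact_mod_cast hg
    have hxp : ∀ i ≤ k, (0:ℝ) < 1 / (A i : ℝ) := by
      intro i hi
      have : (0:ℝ) < A i := by exact_mod_cast hA i (by omega)
      positivity
    have hab := abel_bound (fun i => 1 / (A i : ℝ)) (fun i => 1 / (TT g i + 1)) k hxp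
      (by
        intro i hi
        have h1 : (0:ℝ) < A i := by exact_mod_cast hA i (by omega)
        have h2 : (A i:ℝ) ≤ A (i+1) := by exact_mod_cast hmono i (by omega)
        exact one_div_le_one_div_of_le h1 h2)
      (by
        intro j hj
        rw [DD_eq A g j hg]
        linarith [ih j (by omega) (by omega)])
    have hT : ∀ i, 1 ≤ TT g i := TT_one_le g hg
    rw [DD_eq A g (k+1) hg] at hab
    have hneg : (rr A g (k+1) - 1 / TT g (k+1)) / (1 / (A k : ℝ)) < 0 :=
      div_neg_of_neg_of_pos (by linarith) (hxp k le_rfl)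
    have hz : ∀ i < k + 1, 0 < (1 / (TT g i + 1)) / (1 / (A i : ℝ)) := by
      intro i hi
      have := hxp i (by omega)
      have := hT i
      positivity
    have hpe := prod_le_exp_sum _ (k+1) hz
    have hlt1 : ∏ i ∈ range (k+1), (1 / (TT g i + 1)) / (1 / (A i : ℝ)) < 1 := by
      refine lt_of_le_of_lt hpe ?_
      rw [Real.exp_lt_one_iff]
      linarith
    have hpp : (0:ℝ) < ∏ i ∈ range (k+1), (A i : ℝ) := by
      apply Finset.prod_pos; intro i hi
      have := hA i (by have := Finset.mem_range.1 hi; omega)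
      exact_mod_cast this
    have hprod : ∏ i ∈ range (k+1), (1 / (TT g i + 1)) / (1 / (A i : ℝ))
        = (∏ i ∈ range (k+1), (A i : ℝ)) / (TT g (k+1) / g) := by
      rw [← TT_prod g hg, ← Finset.prod_div_distrib]
      apply Finset.prod_congr rfl
      intro i _
      simp [div_eq_mul_inv, mul_comm]
    rw [hprod, div_lt_one (by have := hT (k+1); positivity), lt_div_iff₀ hgp] at hlt1
    have hl := rr_lower A g (k+1) hg (fun i hi => hA i (by omega)) (hr (k+1) hk)
    have : 1 / TT g (k+1) < 1 / ((g : ℝ) * ∏ i ∈ range (k+1), (A i : ℝ)) := by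
      apply one_div_lt_one_div_of_lt (by positivity)
      linarith
    linarith

theorem branch_bound (A : ℕ → ℕ) (g n c : ℕ) (hg : 1 ≤ g) (hA : ∀ i < n, 1 ≤ A i)
    (hmono : ∀ i, i + 1 < n → A i ≤ A (i + 1)) (hr : ∀ k ≤ n, 0 < rr A g k)
    (k : ℕ) (hk : k + 1 ≤ n) (hx : rr A g (k + 1) * (A k : ℝ) ≤ c) :
    (∏ i ∈ range (k + 1), (A i : ℝ)) / rr A g (k + 1) ^ c
        ≤ TT g (k + 1) / g * TT g (k + 1) ^ c ∧
    ((∏ i ∈ range (k + 1), (A i : ℝ)) / rr A g (k + 1) ^ c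
        = TT g (k + 1) / g * TT g (k + 1) ^ c → ∀ i ≤ k, (A i : ℝ) = TT g i + 1) := by
  have hgp : (0:ℝ) < g := by exact_mod_cast hg
  have hAp : ∀ i ≤ k, (0:ℝ) < (A i : ℝ) := by
    intro i hi; exact_mod_cast hA i (by omega)
  have hxp : ∀ i ≤ k, (0:ℝ) < 1 / (A i : ℝ) := by
    intro i hi
    have := hAp i hi
    positivity
  have hcur := curtiss A g n hg hA hmono hr
  have hT : ∀ i, 1 ≤ TT g i := TT_one_le g hg
  have hab := abel_bound (fun i => 1 / (A i : ℝ)) (fun i => 1 / (TT g i + 1)) k hxp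
    (by
      intro i hi
      have h1 := hAp i (by omega)
      have h2 : (A i:ℝ) ≤ A (i+1) := by exact_mod_cast hmono i (by omega)
      exact one_div_le_one_div_of_le h1 h2)
    (by
      intro j hj
      rw [DD_eq A g j hg]
      linarith [hcur j (by omega)])
  rw [DD_eq A g (k+1) hg] at hab
  have hz : ∀ i < k + 1, 0 < (1 / (TT g i + 1)) / (1 / (A i : ℝ)) := by
    intro i hi
    have := hxp i (by omega)
    have := hT i
    positivity
  have hprod : ∏ i ∈ range (k+1), (1 / (TT g i + 1)) / (1 / (A i : ℝ))
      = (∏ i ∈ range (k+1), (A i : ℝ)) / (TT g (k+1) / g) := by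
    rw [← TT_prod g hg, ← Finset.prod_div_distrib]
    apply Finset.prod_congr rfl
    intro i _
    simp [div_eq_mul_inv, mul_comm]
  have hpp : (0:ℝ) < ∏ i ∈ range (k+1), (A i : ℝ) := by
    apply Finset.prod_pos; intro i hi
    exact hAp i (by have := Finset.mem_range.1 hi; omega)
  set r := rr A g (k+1) with hrdef
  set T := TT g (k+1) with hTdef
  have hr0 : 0 < r := hr (k+1) hk
  have hT0 : 0 < T := by have := hT (k+1); linarith
  have hrT := hcur (k+1) hk
  rw [← hrdef, ← hTdef] at hrT
  set S := ∑ i ∈ range (k+1), ((1 / (TT g i + 1)) / (1 / (A i : ℝ)) - 1) with hS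
  -- total exponent
  have htot : S + c * (1 / (T * r) - 1) ≤ 0 := by
    have h1 : (r - 1 / T) / (1 / (A k : ℝ)) = (r - 1/T) * A k := by
      have := hAp k le_rfl
      field_simp
    rw [h1] at hab
    have h2 : (c:ℝ) * (1 / (T * r) - 1) = - ((r - 1/T) * (c / r)) := by
      field_simp; ring
    have h3 : (A k : ℝ) ≤ c / r := by rw [le_div_iff₀ hr0]; linarith
    have h4 := mul_le_mul_of_nonneg_left h3 (sub_nonneg.2 hrT)
    linarith
  have hpow : (1 / (T * r)) ^ c ≤ Real.exp (c * (1 / (T * r) - 1)) := by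
    rw [Real.exp_nat_mul]
    apply pow_le_pow_left₀ (by positivity)
    have := Real.add_one_le_exp (1 / (T * r) - 1)
    linarith
  have hexp : Real.exp S * Real.exp (c * (1 / (T * r) - 1)) ≤ 1 := by
    rw [← Real.exp_add, Real.exp_le_one_iff]; exact htot
  have hrew : (∏ i ∈ range (k + 1), (A i : ℝ)) / r ^ c = 
      ((∏ i ∈ range (k+1), (1 / (TT g i + 1)) / (1 / (A i : ℝ))) * (1 / (T * r)) ^ c) *
       (T / g * T ^ c) := by
    rw [hprod, div_pow, mul_pow, one_pow]
    field_simp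
  have hpos2 : 0 < T / g * T ^ c := by positivity
  have hpos3 : 0 < (1 / (T * r)) ^ c := by positivity
  rw [hrew]
  constructor
  · have h1 : (∏ i ∈ range (k+1), (1 / (TT g i + 1)) / (1 / (A i : ℝ))) * (1 / (T * r)) ^ c ≤ 1 := by
      refine le_trans ?_ hexp
      exact mul_le_mul (prod_le_exp_sum _ (k+1) hz) hpow hpos3.le (Real.exp_pos _).le
    calc _ ≤ 1 * (T / g * T ^ c) := mul_le_mul_of_nonneg_right h1 hpos2.le
      _ = _ := one_mul _
  · intro heq
    by_contra hne
    push Not at hne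
    obtain ⟨i, hi, hne⟩ := hne
    have h1 : (∏ i ∈ range (k+1), (1 / (TT g i + 1)) / (1 / (A i : ℝ))) * (1 / (T * r)) ^ c < 1 := by
      refine lt_of_lt_of_le ?_ hexp
      refine mul_lt_mul (prod_lt_exp_sum _ (k+1) hz ⟨i, by omega, ?_⟩) hpow hpos3 (Real.exp_pos _).le
      intro h
      apply hne
      have := hAp i hi
      have := hT i
      field_simp at h
      linarith
    have := mul_lt_mul_of_pos_right h1 hpos2
    linarith

/-- value of the strategy with `k` Sylvester terms -/
noncomputable def VV (g d k : ℕ) : ℝ :=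
  TT g k / g * (((d + 1 - k : ℕ) : ℝ) * TT g k) ^ (d - 1 - k)


theorem pow_aux (c : ℕ) (x : ℝ) (h1 : (c:ℝ) + 1 ≤ x) (h2 : x ≤ c + 3) :
    ((c:ℝ) + 2) ^ c * x ^ (c + 1) ≤ ((c:ℝ) + 3) ^ (c + 1) * (x - 1) ^ c := by
  have hc : (0:ℝ) ≤ c := Nat.cast_nonneg c
  have hx : 0 < x := by linarith
  obtain ⟨δ, hδ⟩ : ∃ δ, δ = (c + 3) / x - 1 := ⟨_, rfl⟩
  have hδ0 : 0 ≤ δ := by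
    rw [hδ, sub_nonneg, le_div_iff₀ hx]; linarith
  have hδ1 : (c + 1) * δ ≤ 2 := by
    have : (c + 3) / x ≤ (c + 3) / (c + 1) := div_le_div_of_nonneg_left (by linarith) (by linarith) h1
    have h3 : ((c:ℝ) + 3) / (c + 1) = 1 + 2 / (c + 1) := by field_simp; ring
    have h4 : δ ≤ 2 / (c + 1) := by linarith
    rw [le_div_iff₀ (by linarith)] at h4
    linarith
  have hb : 1 + (c:ℝ) * (-(δ / (c + 2))) ≤ (1 + (-(δ / (c + 2)))) ^ c := by
    apply one_add_mul_le_pow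
    have : δ / (c + 2) ≤ 2 := by
      rw [div_le_iff₀ (by linarith)]; nlinarith
    linarith
  have hk : 1 ≤ (1 + (-(δ / (c + 2)))) ^ c * (1 + δ) := by
    have h5 : 1 ≤ (1 + (c:ℝ) * (-(δ / (c + 2)))) * (1 + δ) := by
      have : (1 + (c:ℝ) * (-(δ / (c + 2)))) * (1 + δ) = 1 + δ * (2 - c * δ) / (c + 2) := by
        field_simp; ring
      rw [this]
      have : 0 ≤ δ * (2 - c * δ) / (c + 2) := by
        apply div_nonneg _ (by linarith)
        apply mul_nonneg hδ0
        linarith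
      linarith
    exact h5.trans (mul_le_mul_of_nonneg_right hb (by linarith))
  have h6 : 1 + (-(δ / (c + 2))) = (x - 1) / (c + 2) * ((c + 3) / x) := by
    rw [hδ]; field_simp; ring
  have h7 : 1 + δ = (c + 3) / x := by rw [hδ]; ring
  rw [h6, h7, mul_pow, mul_assoc, ← pow_succ, div_pow, div_pow, div_mul_div_comm,
    le_div_iff₀ (by positivity)] at hk
  linarith

theorem num_aux (j : ℕ) : ((j:ℝ) + 5) ^ (j + 3) < 2 ^ (j + 3) * ((j:ℝ) + 4) ^ (j + 2) := by
  rcases j with _ | j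
  · norm_num
  have hn : (0:ℝ) < ((j + 1 : ℕ) : ℝ) + 4 := by positivity
  set n : ℝ := ((j + 1 : ℕ) : ℝ) + 4 with hnd
  have h1 : (1 + 1 / n) ^ (j + 1 + 4) ≤ Real.exp 1 := by
    have h := Real.add_one_le_exp (1 / n)
    have h2 : (1 + 1 / n) ^ (j + 1 + 4) ≤ (Real.exp (1 / n)) ^ (j + 1 + 4) := by
      apply pow_le_pow_left₀ (by positivity); linarith
    rw [← Real.exp_nat_mul] at h2
    have h3 : ((j + 1 + 4 : ℕ) : ℝ) * (1 / n) = 1 := by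
      rw [hnd]; push_cast; field_simp
    rwa [h3] at h2
  have h2 : (1 + 1 / n) ^ (j + 1 + 3) ≤ 3 := by
    have : (1 + 1 / n) ^ (j + 1 + 3) ≤ (1 + 1 / n) ^ (j + 1 + 4) :=
      pow_le_pow_right₀ (by have : 0 < 1 / n := by positivity
                            linarith) (by omega)
    have := Real.exp_one_lt_d9
    linarith
  have h3 : 3 * n < 2 ^ (j + 1 + 3) := by
    have h4 : 3 * (j + 5) < 2 ^ (j + 1 + 3) := by
      clear * -
      induction j with
      | zero => norm_num
      | succ j ih => rw [show j + 1 + 1 + 3 = (j + 1 + 3) + 1 by ring, pow_succ]; linarith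
    have h5 : ((3 * (j + 5) : ℕ) : ℝ) < ((2 ^ (j + 1 + 3) : ℕ) : ℝ) := by exact_mod_cast h4
    push_cast at h5
    rw [hnd]; push_cast; linarith
  have h4 : ((j + 1 : ℕ) : ℝ) + 5 = (1 + 1 / n) * n := by
    rw [add_mul, one_div_mul_cancel hn.ne', hnd]; ring
  rw [h4, mul_pow]
  have h5 : 0 < n ^ (j + 1 + 2) := by positivity
  calc (1 + 1 / n) ^ (j + 1 + 3) * n ^ (j + 1 + 3) ≤ 3 * n ^ (j + 1 + 3) :=
        mul_le_mul_of_nonneg_right h2 (by positivity)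
    _ = (3 * n) * n ^ (j + 1 + 2) := by ring
    _ < _ := mul_lt_mul_of_pos_right h3 h5

theorem VV_lt (g k j : ℕ) (hg : 1 ≤ g) : VV g (k + j + 4) k < VV g (k + j + 4) (k + 1) := by
  have hgp : (0:ℝ) < g := by exact_mod_cast hg
  have hT := TT_one_le g hg k
  have e1 : k + j + 4 + 1 - k = j + 5 := by omega
  have e2 : k + j + 4 - 1 - k = j + 3 := by omega
  have e3 : k + j + 4 + 1 - (k + 1) = j + 4 := by omega
  have e4 : k + j + 4 - 1 - (k + 1) = j + 2 := by omega
  rw [VV, VV, e1, e2, e3, e4, TT_succ]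
  push_cast
  set T := TT g k
  have h := num_aux j
  have h1 : T * 2 ^ (j + 3) ≤ (T + 1) ^ (j + 3) := by
    have h2 : (2:ℝ) ^ (j + 1) ≤ (T + 1) ^ (j + 1) := pow_le_pow_left₀ (by norm_num) (by linarith) _
    have h3 : 4 * T ≤ (T + 1) ^ 2 := by nlinarith [sq_nonneg (T - 1)]
    calc T * 2 ^ (j + 3) = 2 ^ (j + 1) * (4 * T) := by ring
      _ ≤ (T + 1) ^ (j + 1) * (T + 1) ^ 2 := mul_le_mul h2 h3 (by linarith) (by positivity)
      _ = _ := by ring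
  have h2 : T * ((j:ℝ) + 5) ^ (j + 3) < (T + 1) ^ (j + 3) * ((j:ℝ) + 4) ^ (j + 2) := by
    calc T * ((j:ℝ) + 5) ^ (j + 3) < T * (2 ^ (j + 3) * ((j:ℝ) + 4) ^ (j + 2)) :=
          mul_lt_mul_of_pos_left h (by linarith)
      _ = (T * 2 ^ (j + 3)) * ((j:ℝ) + 4) ^ (j + 2) := by ring
      _ ≤ _ := mul_le_mul_of_nonneg_right h1 (by positivity)
  have hp : 0 < T ^ (j + 3) / g := by positivity
  have := mul_lt_mul_of_pos_left h2 hp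
  calc _ = T ^ (j + 3) / g * (T * ((j:ℝ) + 5) ^ (j + 3)) := by rw [mul_pow]; ring
    _ < _ := this
    _ = _ := by rw [mul_pow, mul_pow]; ring

theorem VV_last (g d : ℕ) (hg : 1 ≤ g) (hd : 3 ≤ d)
    (h31 : ¬(d = 3 ∧ g = 1)) (h32 : ¬(d = 3 ∧ g = 2)) (h41 : ¬(d = 4 ∧ g = 1)) 
    (h33 : ¬(d = 3 ∧ g = 3)) :
    VV g d (d - 3) < VV g d (d - 2) := by
  obtain ⟨k, rfl⟩ : ∃ k, d = k + 3 := ⟨d - 3, by omega⟩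
  have hgp : (0:ℝ) < g := by exact_mod_cast hg
  have hT := TT_one_le g hg k
  have hT3 : 3 < TT g k := by
    rcases k with _ | _ | k
    · rw [TT_zero]
      have : 3 < g := by omega
      exact_mod_cast this
    · rw [TT_succ, TT_zero]
      have : 2 ≤ g := by omega
      have : (2:ℝ) ≤ g := by exact_mod_cast this
      nlinarith
    · rw [TT_succ, TT_succ]
      have := TT_one_le g hg k
      have h2 : 2 ≤ TT g k * (TT g k + 1) := by nlinarith
      nlinarith
  have e0 : k + 3 - 3 = k := by omega
  have e5 : k + 3 - 2 = k + 1 := by omega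
  have e1 : k + 3 + 1 - k = 4 := by omega
  have e2 : k + 3 - 1 - k = 2 := by omega
  have e3 : k + 3 + 1 - (k + 1) = 3 := by omega
  have e4 : k + 3 - 1 - (k + 1) = 1 := by omega
  rw [VV, VV, e0, e5, e1, e2, e3, e4, TT_succ]
  push_cast
  set T := TT g k
  have h2 : T * 16 < 3 * (T + 1) ^ 2 := by nlinarith
  have hp : 0 < T ^ 2 / g := by positivity
  have := mul_lt_mul_of_pos_left h2 hp
  calc _ = T ^ 2 / g * (T * 16) := by ring
    _ < _ := this
    _ = _ := by ring

theorem VV_33 : VV 3 3 0 ≤ VV 3 3 1 := by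
  rw [VV, VV, TT_succ, TT_zero]; norm_num

theorem VV_lt_top (g d : ℕ) (hg : 1 ≤ g) (hd : 3 ≤ d)
    (h31 : ¬(d = 3 ∧ g = 1)) (h32 : ¬(d = 3 ∧ g = 2)) (h41 : ¬(d = 4 ∧ g = 1)) 
    (h33 : ¬(d = 3 ∧ g = 3)) (k : ℕ) (hk : k ≤ d - 3) : VV g d k < VV g d (d - 2) := by
  obtain ⟨j, hj⟩ : ∃ j, k = d - 3 - j := ⟨d - 3 - k, by omega⟩
  induction j generalizing k with
  | zero => rw [hj]; exact VV_last g d hg hd h31 h32 h41 h33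
  | succ j ih =>
    by_cases hjd : d - 3 ≤ j
    · exact ih k hk (by omega)
    have h1 := ih (k + 1) (by omega) (by omega)
    have h2 := VV_lt g k (d - k - 4) hg
    rw [show k + (d - k - 4) + 4 = d by omega] at h2
    linarith

theorem rr_pos_of (A : ℕ → ℕ) (g d : ℕ) (hA : ∀ i < d + 1, 1 ≤ A i)
    (hmono : ∀ i, i + 1 < d + 1 → A i ≤ A (i + 1))
    (hsum : ∑ i ∈ range (d + 1), 1 / (A i : ℝ) = 1 / g) :
    ∀ j k, k + j = d → 0 < rr A g k ∧ rr A g k * A k ≤ j + 1 := by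
  intro j
  induction j with
  | zero =>
    intro k hk
    obtain rfl : k = d := by omega
    have h0 : rr A g (k + 1) = 0 := by rw [rr, hsum, sub_self]
    rw [rr_succ] at h0
    have : (0:ℝ) < A k := by exact_mod_cast hA k (by omega)
    have h1 : rr A g k = 1 / (A k : ℝ) := by linarith
    rw [h1]
    constructor
    · positivity
    · rw [one_div_mul_cancel this.ne']; simp
  | succ j ih =>
    intro k hk
    obtain ⟨h1, h2⟩ := ih (k + 1) (by omega)
    have hp : (0:ℝ) < A k := by exact_mod_cast hA k (by omega)
    have hm : (A k : ℝ) ≤ A (k + 1) := by exact_mod_cast hmono k (by omega)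
    have h3 : rr A g k = rr A g (k + 1) + 1 / A k := by rw [rr_succ]; ring
    rw [h3]
    constructor
    · positivity
    · rw [add_mul, one_div_mul_cancel hp.ne']
      have := mul_le_mul_of_nonneg_left hm h1.le
      push_cast
      linarith

theorem core_branch (A : ℕ → ℕ) (g d : ℕ) (hg : 1 ≤ g) (hd : 2 ≤ d)
    (hA : ∀ i < d + 1, 1 ≤ A i)
    (hmono : ∀ i, i + 1 < d + 1 → A i ≤ A (i + 1))
    (hsum : ∑ i ∈ range (d + 1), 1 / (A i : ℝ) = 1 / g) :
    ((∏ i ∈ range (d - 1), (A i : ℝ)) ≤ VV g d (d - 2) ∧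
      ((∏ i ∈ range (d - 1), (A i : ℝ)) = VV g d (d - 2) → ∀ i < d - 2, (A i : ℝ) = TT g i + 1)) ∨
    (∃ k, k + 3 ≤ d ∧ (∏ i ∈ range (d - 1), (A i : ℝ)) ≤ VV g d k) := by
  have hgp : (0:ℝ) < g := by exact_mod_cast hg
  have hrr := rr_pos_of A g d hA hmono hsum
  have hr : ∀ k ≤ d, 0 < rr A g k := fun k hk => (hrr (d - k) k (by omega)).1
  set P := ∏ i ∈ range (d - 1), (A i : ℝ) with hP
  by_contra hcon
  push Not at hcon
  obtain ⟨hc1, hc2⟩ := hcon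
  have key : ∀ c k, k + c = d - 1 → 1 ≤ c → 
      P ≤ ((c:ℝ) + 2) ^ c * ((∏ i ∈ range k, (A i : ℝ)) / rr A g k ^ c) := by
    intro c
    induction c with
    | zero => intro k _ h; omega
    | succ c ih =>
      intro k hk _
      rcases Nat.eq_zero_or_pos c with rfl | hcpos
      · have hk1 : d - 1 = k + 1 := by omega
        rw [hP, hk1, Finset.prod_range_succ]
        have h1 := (hrr 2 k (by omega)).2
        have h2 := hr k (by omega)
        have h3 : (A k : ℝ) ≤ 3 / rr A g k := by
          rw [le_div_iff₀ h2]; push_cast at h1; linarith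
        have h4 : (0:ℝ) ≤ ∏ i ∈ range k, (A i : ℝ) := by positivity
        calc _ ≤ (∏ i ∈ range k, (A i : ℝ)) * (3 / rr A g k) := mul_le_mul_of_nonneg_left h3 h4
          _ = _ := by norm_num; ring
      · have hq := ih (k + 1) (by omega) hcpos
        have hkp : (0:ℝ) < A k := by exact_mod_cast hA k (by omega)
        have hr1 := hr (k + 1) (by omega)
        have hr0 := hr k (by omega)
        by_cases hx : rr A g (k + 1) * (A k : ℝ) ≤ c
        · exfalso
          have hb := branch_bound A g d c hg (fun i hi => hA i (by omega))
            (fun i hi => hmono i (by omega)) hr k (by omega) hx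
          have hV : VV g d (k + 1) = ((c:ℝ) + 2) ^ c * (TT g (k + 1) / g * TT g (k + 1) ^ c) := by
            rw [VV, show d + 1 - (k + 1) = c + 2 by omega, show d - 1 - (k + 1) = c by omega]
            push_cast; rw [mul_pow]; ring
          have hcp : (0:ℝ) < ((c:ℝ) + 2) ^ c := by positivity
          have hle : P ≤ VV g d (k + 1) := by
            rw [hV]; exact hq.trans (mul_le_mul_of_nonneg_left hb.1 hcp.le)
          rcases Nat.lt_or_ge 1 c with hc | hc
          · have := hc2 (k + 1) (by omega)
            linarith
          · obtain rfl : c = 1 := by omega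
            have hkd : d - 2 = k + 1 := by omega
            rw [hkd] at hc1
            obtain ⟨heq, i, hi, hne⟩ := hc1 hle
            apply hne
            apply hb.2 _ i (by omega)
            apply le_antisymm hb.1
            have h5 := hq
            rw [heq, hV] at h5
            exact le_of_mul_le_mul_left h5 hcp
        · push Not at hx
          refine hq.trans ?_
          set x := rr A g k * A k with hxdef
          have hxle : x ≤ c + 3 := by
            have := (hrr (c + 2) k (by omega)).2
            push_cast at this; linarith
          have hx1 : rr A g (k + 1) * (A k : ℝ) = x - 1 := by
            rw [rr_succ, sub_mul, one_div_mul_cancel hkp.ne']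
          rw [hx1] at hx
          have hpa := pow_aux c x (by linarith) hxle
          have hAk : (A k : ℝ) = x / rr A g k := by rw [hxdef]; field_simp
          have hrk1 : rr A g (k + 1) = (x - 1) * rr A g k / x := by
            rw [← hx1, hxdef]; field_simp
          have hc0 : (0:ℝ) < c := by exact_mod_cast hcpos
          have hxpos : 0 < x - 1 := by linarith
          have hxpos' : 0 < x := by linarith
          rw [Finset.prod_range_succ, hrk1, hAk]
          have h4 : (0:ℝ) ≤ ∏ i ∈ range k, (A i : ℝ) := by positivity
          set p := ∏ i ∈ range k, (A i : ℝ)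
          set r := rr A g k
          have e1 : ((c:ℝ) + 2) ^ c * (p * (x / r) / ((x - 1) * r / x) ^ c)
              = (((c:ℝ) + 2) ^ c * x ^ (c + 1)) * (p / (r ^ (c + 1) * (x - 1) ^ c)) := by
            rw [div_pow, mul_pow]; field_simp; ring
          have e2 : (((c + 1 : ℕ):ℝ) + 2) ^ (c + 1) * (p / r ^ (c + 1))
              = (((c:ℝ) + 3) ^ (c + 1) * (x - 1) ^ c) * (p / (r ^ (c + 1) * (x - 1) ^ c)) := by
            push_cast
            rw [show (c:ℝ) + 1 + 2 = c + 3 by ring]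
            field_simp
          rw [e1, e2]
          exact mul_le_mul_of_nonneg_right hpa (by positivity)
  have h0 := key (d - 1) 0 (by omega) (by omega)
  have hV0 : ((( d - 1 : ℕ):ℝ) + 2) ^ (d - 1) * ((∏ i ∈ range 0, (A i : ℝ)) / rr A g 0 ^ (d - 1))
     = VV g d 0 := by
    rw [VV, TT_zero]
    have : ((d + 1 - 0 : ℕ) : ℝ) = ((d - 1 : ℕ) : ℝ) + 2 := by
      rw [show d + 1 - 0 = d - 1 + 2 by omega]; push_cast; ring
    rw [this, show d - 1 - 0 = d - 1 by omega]
    simp only [rr, Finset.range_zero, Finset.prod_empty, Finset.sum_empty, sub_zero]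
    rw [mul_pow, div_self hgp.ne']; simp
  rw [hV0] at h0
  rcases Nat.lt_or_ge d 3 with hd3 | hd3
  · obtain rfl : d = 2 := by omega
    obtain ⟨_, i, hi, _⟩ := hc1 h0
    omega
  · have := hc2 0 (by omega)
    linarith

theorem VV_top (g d : ℕ) (hd : 2 ≤ d) :
    VV g d (d - 2) = 3 * (tsylv g (d - 1) : ℝ) ^ 2 / g := by
  rw [VV, TT, show d - 2 + 1 = d - 1 by omega, show d + 1 - (d - 2) = 3 by omega,
    show d - 1 - (d - 2) = 1 by omega]
  push_cast; ring

theorem tail_eq (A : ℕ → ℕ) (g d k N : ℕ) (hk : d = k + 2) (hN : 0 < N) 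
    (hA : ∀ i < d + 1, 1 ≤ A i)
    (hmono : ∀ i, i + 1 < d + 1 → A i ≤ A (i + 1))
    (hsum : ∑ i ∈ range (d + 1), 1 / (A i : ℝ) = 1 / g)
    (hr : rr A g k = 3 / N) (hAk : A k = N) : A (k + 1) = N ∧ A (k + 2) = N := by
  have h0 : rr A g (k + 3) = 0 := by rw [rr, ← hsum, hk, sub_self]
  rw [rr_succ, rr_succ, rr_succ, hr, hAk] at h0
  have h1 := hmono k (by omega)
  have h2 := hmono (k + 1) (by omega)
  rw [hAk] at h1
  have hNp : (0:ℝ) < N := by exact_mod_cast hN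
  have p1 : (N:ℝ) ≤ A (k + 1) := by exact_mod_cast h1
  have p2 : (A (k + 1):ℝ) ≤ A (k + 2) := by exact_mod_cast h2
  have q1 : 1 / (A (k + 1) : ℝ) ≤ 1 / N := one_div_le_one_div_of_le hNp p1
  have q2 : 1 / (A (k + 2) : ℝ) ≤ 1 / A (k + 1) := one_div_le_one_div_of_le (by linarith) p2
  have e : (3:ℝ) / N = 1 / N + 1 / N + 1 / N := by ring
  have r1 : 1 / (A (k + 1) : ℝ) = 1 / N := by linarith
  have r2 : 1 / (A (k + 2) : ℝ) = 1 / N := by linarith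
  rw [one_div, one_div, inv_inj] at r1 r2
  exact ⟨by exact_mod_cast r1, by exact_mod_cast r2⟩

theorem core_33 (A : ℕ → ℕ) (hA : ∀ i < 4, 1 ≤ A i)
    (hmono : ∀ i, i + 1 < 4 → A i ≤ A (i + 1))
    (hsum : ∑ i ∈ range 4, 1 / (A i : ℝ) = 1 / (3 : ℕ)) (hP : A 0 * A 1 = 144) :
    (A 0 = 4 ∧ A 1 = 36 ∧ A 2 = 36 ∧ A 3 = 36) ∨ (∀ i < 4, A i = 12) := by
  have hrr := rr_pos_of A 3 3 hA hmono hsum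
  have h1 := hrr 3 0 (by omega)
  have h2 := hrr 2 1 (by omega)
  have hp : (0:ℝ) < A 0 := by exact_mod_cast hA 0 (by omega)
  simp only [rr, Finset.sum_range_one, Finset.range_zero, Finset.sum_empty, sub_zero] at h1 h2
  have h12 : A 0 ≤ 12 := by
    have : (A 0 : ℝ) ≤ 12 := by have := h1.2; push_cast at this; linarith
    exact_mod_cast this
  have h3 : 3 < A 0 := by
    have h := h2.1
    have h' : 1 / (A 0 : ℝ) < 1 / (3:ℕ) := by linarith
    have := lt_of_one_div_lt_one_div hp h'
    exact_mod_cast this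
  have hm := hmono 0 (by omega)
  have hb := h2.2
  have ht := tail_eq A 3 3 1 (A 1) rfl (hA 1 (by omega)) hA hmono hsum
  rw [rr] at ht
  simp only [Finset.sum_range_one] at ht
  rw [zero_add] at hm
  clear hmono hA hsum hrr
  generalize ha : A 0 = a at *
  generalize hbb : A 1 = b at *
  interval_cases a
  · obtain rfl : b = 36 := by omega
    left
    have := ht (by norm_num) trivial
    exact ⟨rfl, rfl, this.1, this.2⟩
  · omega
  · obtain rfl : b = 24 := by omega
    norm_num at hb
  · omega
  · obtain rfl : b = 18 := by omega
    norm_num at hb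
  · obtain rfl : b = 16 := by omega
    norm_num at hb
  · omega
  · omega
  · obtain rfl : b = 12 := by omega
    right
    have := ht (by norm_num) trivial
    intro i hi
    interval_cases i
    · exact ha
    · exact hbb
    · exact this.1
    · exact this.2

theorem core (A : ℕ → ℕ) (g d : ℕ) (hg : 1 ≤ g) (hd : 2 ≤ d)
    (h31 : ¬(d = 3 ∧ g = 1)) (h32 : ¬(d = 3 ∧ g = 2)) (h41 : ¬(d = 4 ∧ g = 1)) 
    (hA : ∀ i < d + 1, 1 ≤ A i)
    (hmono : ∀ i, i + 1 < d + 1 → A i ≤ A (i + 1))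
    (hsum : ∑ i ∈ range (d + 1), 1 / (A i : ℝ) = 1 / g) :
    (∏ i ∈ range (d - 1), (A i : ℝ)) ≤ 3 * (tsylv g (d - 1) : ℝ) ^ 2 / g ∧
    ((∏ i ∈ range (d - 1), (A i : ℝ)) = 3 * (tsylv g (d - 1) : ℝ) ^ 2 / g →
      ((∀ i < d - 2, A i = sylv g (i + 1)) ∧ 
        (∀ i, d - 2 ≤ i → i < d + 1 → A i = 3 * tsylv g (d - 1))) ∨
      (d = 3 ∧ g = 3 ∧ ∀ i < 4, A i = 12)) := by
  have hb := core_branch A g d hg hd hA hmono hsum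
  by_cases h33 : d = 3 ∧ g = 3
  · obtain ⟨rfl, rfl⟩ := h33
    have ht : tsylv 3 2 = 12 := by simp [tsylv, sylv]
    have hle : (∏ i ∈ range (3 - 1), (A i : ℝ)) ≤ VV 3 3 (3 - 2) := by
      rcases hb with h | ⟨k, hk, h⟩
      · exact h.1
      · obtain rfl : k = 0 := by omega
        exact h.trans VV_33
    rw [VV_top 3 3 (by omega)] at hle
    refine ⟨hle, ?_⟩
    intro heq
    have h144 : A 0 * A 1 = 144 := by
      have : (A 0 : ℝ) * A 1 = 144 := by
        simp only [show 3 - 1 = 2 from rfl, Finset.prod_range_succ, Finset.prod_range_zero, one_mul, ht] at heq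
        rw [heq]; norm_num
      exact_mod_cast this
    rcases core_33 A hA hmono hsum h144 with h | h
    · left
      simp only [show 3 - 1 = 2 from rfl, ht]
      refine ⟨?_, ?_⟩
      · intro i hi
        obtain rfl : i = 0 := by omega
        simp [sylv, h.1]
      · intro i h1 h2
        interval_cases i
        · exact h.2.1
        · exact h.2.2.1
        · exact h.2.2.2
    · right; exact ⟨rfl, rfl, h⟩
  rw [← VV_top g d hd]
  rcases hb with h | ⟨k, hk, h⟩
  · refine ⟨h.1, fun heq => Or.inl ?_⟩
    have h1 := h.2 heq
    have hfirst : ∀ i < d - 2, A i = sylv g (i + 1) := by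
      intro i hi
      have := h1 i hi
      rw [TT] at this
      rw [ts_sylv]
      exact_mod_cast this
    refine ⟨hfirst, ?_⟩
    obtain ⟨k, rfl⟩ : ∃ k, d = k + 2 := ⟨d - 2, by omega⟩
    simp only [show k + 2 - 2 = k by omega, show k + 2 - 1 = k + 1 by omega] at *
    have hpr : ∏ i ∈ range k, (A i : ℝ) = TT g k / g := by
      rw [← TT_prod g hg]
      apply Finset.prod_congr rfl
      intro i hi
      exact h1 i (Finset.mem_range.1 hi)
    have hgp : (0:ℝ) < g := by exact_mod_cast hg
    have hT := TT_one_le g hg k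
    have hAk : (A k : ℝ) = 3 * TT g k := by
      have hv : VV g (k + 2) k = TT g k / g * (3 * TT g k) := by
        rw [VV, show k + 2 + 1 - k = 3 by omega, show k + 2 - 1 - k = 1 by omega]; push_cast; ring
      rw [Finset.prod_range_succ, hpr, hv] at heq
      exact mul_left_cancel₀ (by positivity) heq
    have hAk' : A k = 3 * tsylv g (k + 1) := by rw [TT] at hAk; exact_mod_cast hAk
    have hrk : rr A g k = 3 / ((3 * tsylv g (k + 1) : ℕ) : ℝ) := by
      have : ∑ i ∈ range k, 1 / (A i : ℝ) = 1 / g - 1 / TT g k := by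
        rw [← TT_sum g hg]
        apply Finset.sum_congr rfl
        intro i hi
        rw [h1 i (Finset.mem_range.1 hi)]
      rw [rr, this, TT]
      push_cast
      have : (0:ℝ) < tsylv g (k + 1) := by rw [TT] at hT; linarith
      field_simp
      ring
    have := tail_eq A g (k + 2) k (3 * tsylv g (k + 1)) rfl 
      (by have := ts_pos g hg k; omega) hA hmono hsum hrk hAk'
    intro i hi1 hi2
    obtain rfl | rfl | rfl : i = k ∨ i = k + 1 ∨ i = k + 2 := by omega
    · exact hAk'
    · exact this.1
    · exact this.2
  · have := VV_lt_top g d hg (by omega) h31 h32 h41 h33 k (by omega)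
    exact ⟨by linarith, fun he => by linarith⟩

theorem index_closure_rows {d : ℕ} (M : Matrix (Fin d) (Fin d) ℤ) (h : M.det ≠ 0) :
    (AddSubgroup.closure (Set.range fun i => M i)).index = M.det.natAbs := by
  have hli := Matrix.linearIndependent_rows_of_det_ne_zero h
  rw [← Submodule.span_int_eq_addSubgroupClosure]
  have := Submodule.natAbs_det_basis_change (Pi.basisFun ℤ (Fin d)) _ (Module.Basis.span hli)
  rw [AddSubgroup.index_eq_card]
  refine Eq.trans this.symm ?_
  congr 1
  rw [Module.Basis.det_apply, ← Matrix.det_transpose]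
  congr 1
  ext i k
  simp [Module.Basis.toMatrix_apply, Module.Basis.span_apply]

theorem det_eq_weight_mul_index {d : ℕ} (p : Fin (d + 1) → Fin d → ℤ) (w : Fin (d + 1) → ℕ)
    (j : Fin (d + 1)) (hdet : (Matrix.of fun i => p (j.succAbove i)).det ≠ 0)
    (hbal : ∑ i, (w i : ℤ) • p i = 0) (hgcd : Finset.univ.gcd w = 1) (hw : 0 < w j) :
    (Matrix.of fun i => p (j.succAbove i)).det.natAbs
      = w j * (AddSubgroup.closure (Set.range p)).index := by
  set M : Matrix (Fin d) (Fin d) ℤ := Matrix.of fun i => p (j.succAbove i) with hM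
  have hli := Matrix.linearIndependent_rows_of_det_ne_zero hdet
  set B := AddSubgroup.closure (Set.range fun i => M i) with hB
  have hBi : B.index = M.det.natAbs := index_closure_rows M hdet
  set C := AddSubgroup.closure (Set.range p) with hC
  have hBC : B ≤ C := by
    rw [hB, AddSubgroup.closure_le]
    rintro _ ⟨i, rfl⟩
    exact AddSubgroup.subset_closure ⟨j.succAbove i, rfl⟩
  have hmap : C.map (QuotientAddGroup.mk' B) = AddSubgroup.zmultiples (QuotientAddGroup.mk' B (p j)) := by
    apply le_antisymm
    · rw [hC, AddMonoidHom.map_closure, AddSubgroup.closure_le]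
      rintro _ ⟨_, ⟨i, rfl⟩, rfl⟩
      rcases Fin.eq_self_or_eq_succAbove j i with rfl | ⟨k, rfl⟩
      · exact AddSubgroup.mem_zmultiples _
      · have : QuotientAddGroup.mk' B (p (j.succAbove k)) = 0 := by
          rw [QuotientAddGroup.mk'_apply, QuotientAddGroup.eq_zero_iff]
          exact AddSubgroup.subset_closure ⟨k, rfl⟩
        rw [this]
        exact AddSubgroup.zero_mem _
    · rw [AddSubgroup.zmultiples_le]
      exact ⟨p j, AddSubgroup.subset_closure ⟨j, rfl⟩, rfl⟩
  have hord : addOrderOf (QuotientAddGroup.mk' B (p j)) = w j := by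
    have hiff : ∀ n : ℕ, n • (QuotientAddGroup.mk' B (p j)) = 0 ↔ n • p j ∈ B := by
      intro n
      rw [← map_nsmul, QuotientAddGroup.mk'_apply, QuotientAddGroup.eq_zero_iff]
    have hbal' : (w j : ℤ) • p j + ∑ i, (w (j.succAbove i) : ℤ) • M i = 0 := by
      rw [← hbal, Fin.sum_univ_succAbove _ j]; rfl
    apply Nat.dvd_antisymm
    · rw [addOrderOf_dvd_iff_nsmul_eq_zero, hiff]
      have h1 : w j • p j = - ∑ i, (w (j.succAbove i) : ℤ) • M i := by
        rw [← natCast_zsmul]; exact eq_neg_of_add_eq_zero_left hbal'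
      rw [h1]
      apply AddSubgroup.neg_mem
      apply AddSubgroup.sum_mem
      intro i _
      apply AddSubgroup.zsmul_mem
      exact AddSubgroup.subset_closure ⟨i, rfl⟩
    · have h0 : addOrderOf (QuotientAddGroup.mk' B (p j)) • (QuotientAddGroup.mk' B (p j)) = 0 :=
        addOrderOf_nsmul_eq_zero _
      set n := addOrderOf (QuotientAddGroup.mk' B (p j))
      rw [hiff, hB, ← Submodule.span_int_eq_addSubgroupClosure] at h0
      have h1 : n • p j ∈ Submodule.span ℤ (Set.range fun i => M i) := h0
      rw [Submodule.mem_span_range_iff_exists_fun] at h1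
      obtain ⟨c, hc⟩ := h1
      have h2 : ∑ i, ((w j : ℤ) * c i + n * w (j.succAbove i)) • M i = 0 := by
        simp only [add_smul, mul_smul, Finset.sum_add_distrib, ← Finset.smul_sum]
        rw [hc]
        have : ∑ i, (w (j.succAbove i) : ℤ) • M i = - ((w j : ℤ) • p j) := 
          eq_neg_of_add_eq_zero_right hbal'
        rw [this, ← natCast_zsmul, smul_neg, smul_comm]
        exact add_neg_cancel _
      have h3 := Fintype.linearIndependent_iff.1 hli _ h2
      have h4 : ∀ i, w j ∣ n * w i := by
        intro i
        rcases Fin.eq_self_or_eq_succAbove j i with rfl | ⟨k, rfl⟩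
        · exact dvd_mul_left _ _
        · have := h3 k
          have h5 : ((w j : ℕ) : ℤ) ∣ ((n * w (j.succAbove k) : ℕ) : ℤ) := by
            refine ⟨- c k, ?_⟩
            push_cast; linarith
          exact_mod_cast h5
      have h5 : w j ∣ Finset.univ.gcd fun i => n * w i := Finset.dvd_gcd fun i _ => h4 i
      rw [Finset.gcd_mul_left, hgcd] at h5
      simpa using h5
  have hidx := AddSubgroup.index_map_eq C (f := QuotientAddGroup.mk' B)
    (QuotientAddGroup.mk'_surjective B) (by rw [QuotientAddGroup.ker_mk']; exact hBC)
  rw [hmap] at hidx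
  have hcard := AddSubgroup.card_mul_index (AddSubgroup.zmultiples (QuotientAddGroup.mk' B (p j)))
  rw [Nat.card_zmultiples, hord, hidx, ← AddSubgroup.index_eq_card, hBi] at hcard
  exact hcard.symm

structure GData (d g : ℕ) (v m : Fin (d + 1) → Fin d → ℤ) (A : Fin (d + 1) → ℕ) : Prop where
  gpos : 0 < g
  pos : ∀ i, 0 < A i
  pair : ∀ i k, ∑ j, m i j * v k j = (if i = k then (A i : ℤ) else 0) - g
  sum : ∑ i, 1 / (A i : ℚ) = 1 / g
  bal : ∀ j, ∑ i, (v i j : ℚ) / A i = 0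
  prim : ∀ i, IsPrimitive (v i)

namespace GData
variable {d g : ℕ} {v m : Fin (d + 1) → Fin d → ℤ} {A : Fin (d + 1) → ℕ}

theorem det_mul (h : GData d g v m A) (j : Fin (d + 1)) :
    (((Matrix.of fun i => m (j.succAbove i)).det * (Matrix.of fun i => v (j.succAbove i)).det : ℤ) : ℚ)
      = (∏ i, (A (j.succAbove i) : ℚ)) * (g / A j) := by
  have hp : ∀ i, (0:ℚ) < A i := fun i => by exact_mod_cast h.pos i
  have hg : (0:ℚ) < g := by exact_mod_cast h.gpos
  rw [← Matrix.det_transpose (Matrix.of fun i => v (j.succAbove i)), ← Matrix.det_mul, Int.cast_det]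
  have e : ((Matrix.of fun i => m (j.succAbove i)) * (Matrix.of fun i => v (j.succAbove i)).transpose).map
      (Int.cast : ℤ → ℚ) = Matrix.diagonal (fun i => (A (j.succAbove i) : ℚ)) *
        (1 + Matrix.replicateCol Unit (fun i => -(g:ℚ) / A (j.succAbove i)) *
          Matrix.replicateRow Unit (fun _ => (1:ℚ))) := by
    ext i k
    have := h.pair (j.succAbove i) (j.succAbove k)
    have hpi := hp (j.succAbove i)
    rw [Matrix.diagonal_mul]
    simp only [Matrix.map_apply, Matrix.mul_apply, Matrix.of_apply, Matrix.transpose_apply]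
    rw [this]
    by_cases hik : i = k
    · subst hik
      simp [Matrix.mul_apply, Matrix.add_apply]
      field_simp
      try ring
    · simp [hik, Matrix.mul_apply, Matrix.add_apply, Matrix.one_apply_ne hik]
      field_simp
  rw [e, Matrix.det_mul, Matrix.det_one_add_replicateCol_mul_replicateRow, Matrix.det_diagonal]
  congr 1
  have hs := h.sum
  rw [Fin.sum_univ_succAbove _ j] at hs
  have h2 : ∑ i, 1 / (A (j.succAbove i) : ℚ) = 1 / g - 1 / A j := by linarith
  have h3 : (fun _ : Fin d => (1:ℚ)) ⬝ᵥ (fun i => -(g:ℚ) / A (j.succAbove i)) = -g * ∑ i, 1 / (A (j.succAbove i) : ℚ) := by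
    rw [dotProduct, Finset.mul_sum]
    apply Finset.sum_congr rfl
    intro i _
    ring
  rw [h3, h2]
  have := hp j
  field_simp
  try ring

theorem det_ne (h : GData d g v m A) (j : Fin (d + 1)) :
    (Matrix.of fun i => m (j.succAbove i)).det ≠ 0 ∧ (Matrix.of fun i => v (j.succAbove i)).det ≠ 0 := by
  have hp : ∀ i, (0:ℚ) < A i := fun i => by exact_mod_cast h.pos i
  have hg : (0:ℚ) < g := by exact_mod_cast h.gpos
  have h1 := h.det_mul j
  have h2 : (0:ℚ) < (∏ i, (A (j.succAbove i) : ℚ)) * (g / A j) :=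
    mul_pos (Finset.prod_pos fun i _ => hp _) (div_pos hg (hp _))
  rw [← h1] at h2
  have h3 := mul_ne_zero_iff.1 (Int.cast_ne_zero.1 h2.ne')
  exact h3

/-- weights -/
noncomputable def wt (A : Fin (d + 1) → ℕ) (i : Fin (d + 1)) : ℕ := Finset.univ.lcm A / A i

theorem lcm_pos (h : GData d g v m A) : 0 < Finset.univ.lcm A := by
  rw [Nat.pos_iff_ne_zero]
  intro h0
  rw [Finset.lcm_eq_zero_iff] at h0
  obtain ⟨i, _, hi⟩ := h0
  exact (h.pos i).ne' hi

theorem wt_mul (A : Fin (d + 1) → ℕ) (i : Fin (d + 1)) : wt A i * A i = Finset.univ.lcm A :=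
  Nat.div_mul_cancel (Finset.dvd_lcm (Finset.mem_univ i))

theorem wt_pos (h : GData d g v m A) (i) : 0 < wt A i := by
  have := wt_mul A i
  have := h.lcm_pos
  by_contra hc
  have : wt A i = 0 := by omega
  simp_all

theorem wt_gcd (h : GData d g v m A) : Finset.univ.gcd (wt A) = 1 := by
  set c := Finset.univ.gcd (wt A) with hc
  have hcd : ∀ i, c ∣ wt A i := fun i => Finset.gcd_dvd (Finset.mem_univ i)
  have hcpos : 0 < c := Nat.pos_of_dvd_of_pos (hcd 0) (h.wt_pos 0)
  have hL := h.lcm_pos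
  have h1 : Finset.univ.lcm A * c ∣ Finset.univ.lcm A := by
    have : c ∣ Finset.univ.lcm A := (hcd 0).trans ⟨A 0, (wt_mul A 0).symm⟩
    obtain ⟨e, he⟩ := this
    have hdv : Finset.univ.lcm A ∣ e := by
      apply Finset.lcm_dvd
      intro i _
      obtain ⟨f, hf⟩ := hcd i
      have h2 := wt_mul A i
      rw [hf, he, mul_assoc] at h2
      exact ⟨f, by rw [← Nat.eq_of_mul_eq_mul_left hcpos h2]; ring⟩
    calc Finset.univ.lcm A * c ∣ e * c := mul_dvd_mul_right hdv c
      _ = Finset.univ.lcm A := by rw [he]; ring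
  have h2 := Nat.le_of_dvd hL h1
  nlinarith

theorem wt_cast (h : GData d g v m A) (i) : (wt A i : ℚ) = (Finset.univ.lcm A : ℕ) / (A i : ℚ) := by
  have hp : (0:ℚ) < A i := by exact_mod_cast h.pos i
  rw [eq_div_iff hp.ne']
  exact_mod_cast wt_mul A i

theorem wt_bal (h : GData d g v m A) : ∑ i, (wt A i : ℤ) • v i = 0 := by
  funext j
  have h1 := h.bal j
  have h2 : ((∑ i, (wt A i : ℤ) * v i j : ℤ) : ℚ) = 0 := by
    push_cast
    have : ∑ i, (wt A i : ℚ) * v i j = (Finset.univ.lcm A : ℕ) * ∑ i, (v i j : ℚ) / A i := by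
      rw [Finset.mul_sum]
      apply Finset.sum_congr rfl
      intro i _
      rw [h.wt_cast]; ring
    rw [this, h1, mul_zero]
  simp only [Finset.sum_apply, Pi.smul_apply, smul_eq_mul, Pi.zero_apply]
  exact_mod_cast h2

theorem wt_sum (h : GData d g v m A) : g * ∑ i, wt A i = Finset.univ.lcm A := by
  have hg : (0:ℚ) < g := by exact_mod_cast h.gpos
  have : ((g * ∑ i, wt A i : ℕ) : ℚ) = (Finset.univ.lcm A : ℕ) := by
    push_cast
    have h1 : ∑ i, (wt A i : ℚ) = (Finset.univ.lcm A : ℕ) * ∑ i, 1 / (A i : ℚ) := by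
      rw [Finset.mul_sum]
      apply Finset.sum_congr rfl
      intro i _
      rw [h.wt_cast]; ring
    rw [h1, h.sum]; field_simp
  exact_mod_cast this

/-- vectors determined by pairings -/
theorem ext_pair (h : GData d g v m A) (x y : Fin d → ℤ) (hxy : ∀ k, ∑ j, x j * v k j = ∑ j, y j * v k j) :
    x = y := by
  have hd := (h.det_ne 0).2
  have : (Matrix.of fun i => v ((0 : Fin (d+1)).succAbove i)).mulVec (x - y) = 0 := by
    funext k
    simp only [Matrix.mulVec, dotProduct, Matrix.of_apply, Pi.sub_apply, Pi.zero_apply, mul_sub]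
    rw [Finset.sum_sub_distrib]
    have := hxy (Fin.succAbove 0 k)
    simp only [mul_comm (v _ _)]
    linarith
  have := Matrix.eq_zero_of_mulVec_eq_zero hd this
  exact sub_eq_zero.1 this

theorem wt_bal_m (h : GData d g v m A) : ∑ i, (wt A i : ℤ) • m i = 0 := by
  apply h.ext_pair
  intro k
  simp only [Finset.sum_apply, Pi.smul_apply, smul_eq_mul, Pi.zero_apply, zero_mul, Finset.sum_const_zero,
    Finset.sum_mul]
  rw [Finset.sum_comm]
  simp only [mul_assoc, ← Finset.mul_sum, h.pair, mul_sub, Finset.sum_sub_distrib, ← Finset.sum_mul]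
  simp only [mul_ite, mul_zero, Finset.sum_ite_eq', Finset.mem_univ, if_true]
  have h1 := wt_mul A k
  have h2 := h.wt_sum
  rw [← h1] at h2
  have h3 : (g : ℤ) * ∑ i, (wt A i : ℤ) = wt A k * A k := by exact_mod_cast h2
  linarith

theorem det_v (h : GData d g v m A) (j) :
    (Matrix.of fun i => v (j.succAbove i)).det.natAbs = wt A j * multOf v :=
  det_eq_weight_mul_index v (wt A) j (h.det_ne j).2 h.wt_bal h.wt_gcd (h.wt_pos j)

theorem det_m (h : GData d g v m A) (j) :
    (Matrix.of fun i => m (j.succAbove i)).det.natAbs = wt A j * multOf m :=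
  det_eq_weight_mul_index m (wt A) j (h.det_ne j).1 h.wt_bal_m h.wt_gcd (h.wt_pos j)

theorem mult_mul (h : GData d g v m A) : 
    multOf v * multOf m * (Finset.univ.lcm A) ^ 2 = g * ∏ i, A i := by
  have hp : (0:ℚ) < A 0 := by exact_mod_cast h.pos 0
  have h1 := h.det_mul 0
  have h2 := h.det_v 0
  have h3 := h.det_m 0
  have hposs : (0:ℚ) ≤ (∏ i, (A (Fin.succAbove 0 i) : ℚ)) * (g / A 0) := by positivity
  have h4 : ((((Matrix.of fun i => m (Fin.succAbove 0 i)).det * (Matrix.of fun i => v (Fin.succAbove 0 i)).det).natAbs : ℕ) : ℚ)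
     = (∏ i, (A (Fin.succAbove 0 i) : ℚ)) * (g / A 0) := by
    rw [Nat.cast_natAbs, Int.cast_abs, h1, abs_of_nonneg hposs]
  rw [Int.natAbs_mul, h2, h3] at h4
  have h5 := wt_mul A 0
  have h6 : ((multOf v * multOf m * (Finset.univ.lcm A) ^ 2 : ℕ) : ℚ) = ((g * ∏ i, A i : ℕ) : ℚ) := by
    rw [← h5, Fin.prod_univ_succAbove _ 0]
    push_cast at h4 ⊢
    have : (multOf v : ℚ) * multOf m * (wt A 0 * A 0) ^ 2 
       = (wt A 0 * multOf m * (wt A 0 * multOf v)) * (A 0) ^ 2 := by ring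
    rw [this, h4]
    field_simp
  exact_mod_cast h6

end GData

/-- pairing with an integer vector as a homomorphism -/
def pairHom {d : ℕ} (x : Fin d → ℤ) : (Fin d → ℤ) →+ ℤ where
  toFun y := ∑ j, y j * x j
  map_zero' := by simp
  map_add' := by intro a b; simp [add_mul, Finset.sum_add_distrib]

theorem pairHom_apply {d : ℕ} (x y : Fin d → ℤ) : pairHom x y = ∑ j, y j * x j := rfl

theorem prim_bezout {d : ℕ} {x : Fin d → ℤ} (h : IsPrimitive x) : ∃ y : Fin d → ℤ, ∑ j, y j * x j = 1 := by
  obtain ⟨y, hy⟩ := Finset.gcd_eq_sum_mul Finset.univ x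
  refine ⟨y, ?_⟩
  rw [IsPrimitive] at h
  rw [← h, hy]
  exact Finset.sum_congr rfl fun i _ => mul_comm _ _

theorem pairHom_surj {d : ℕ} {x : Fin d → ℤ} (h : IsPrimitive x) : Function.Surjective (pairHom x) := by
  obtain ⟨y, hy⟩ := prim_bezout h
  intro n
  refine ⟨n • y, ?_⟩
  rw [map_zsmul, pairHom_apply, hy]; simp

namespace GData
variable {d g : ℕ} {v m : Fin (d + 1) → Fin d → ℤ} {A : Fin (d + 1) → ℕ}

theorem closure_le_comap (h : GData d g v m A) (i) (n : ℕ) (h1 : n ∣ A i) (h2 : n ∣ g) :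
    AddSubgroup.closure (Set.range m) ≤ (AddSubgroup.zmultiples (n : ℤ)).comap (pairHom (v i)) := by
  rw [AddSubgroup.closure_le]
  rintro _ ⟨k, rfl⟩
  rw [SetLike.mem_coe, AddSubgroup.mem_comap, pairHom_apply, h.pair, Int.mem_zmultiples_iff]
  split_ifs with hk
  · subst hk
    exact dvd_sub (by exact_mod_cast h1) (by exact_mod_cast h2)
  · exact dvd_sub (dvd_zero _) (by exact_mod_cast h2)

theorem index_comap (h : GData d g v m A) (i) (n : ℕ) :
    ((AddSubgroup.zmultiples (n : ℤ)).comap (pairHom (v i))).index = n := by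
  rw [AddSubgroup.index_comap_of_surjective _ (pairHom_surj (h.prim i)), Int.index_zmultiples]
  simp

theorem dvd_mult_m' (h : GData d g v m A) (i) (n : ℕ) (h1 : n ∣ A i) (h2 : n ∣ g) : n ∣ multOf m := by
  have := AddSubgroup.index_dvd_of_le (h.closure_le_comap i n h1 h2)
  rw [h.index_comap] at this
  exact this

theorem dvd_mult_m (h : GData d g v m A) : g ∣ multOf m := by
  rw [Nat.dvd_iff_prime_pow_dvd_dvd]
  intro p k hp hk
  have h1 : g ∣ Finset.univ.lcm A := ⟨_, h.wt_sum.symm⟩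
  have h2 : p ^ k ∣ Finset.univ.lcm A := hk.trans h1
  have h3 : ∀ s : Finset (Fin (d+1)), p ^ k ∣ s.lcm A → (k = 0 ∨ ∃ i, p ^ k ∣ A i) := by
    intro s
    induction s using Finset.induction_on with
    | empty =>
      intro h0
      left
      rw [Finset.lcm_empty, Nat.dvd_one] at h0
      rcases Nat.pow_eq_one.1 h0 with h0 | h0
      · exact absurd h0 hp.ne_one
      · exact h0
    | insert a s ha ih =>
      intro h0
      rw [Finset.lcm_insert] at h0
      change p ^ k ∣ Nat.lcm _ _ at h0
      have hs0 : s.lcm A ≠ 0 := by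
        intro h00
        rw [Finset.lcm_eq_zero_iff] at h00
        obtain ⟨i, _, hi⟩ := h00
        exact (h.pos i).ne' hi
      have hor : p ^ k ∣ A a ∨ p ^ k ∣ s.lcm A := by
        rw [hp.pow_dvd_iff_le_factorization (Nat.lcm_ne_zero (h.pos a).ne' hs0),
          Nat.factorization_lcm (h.pos a).ne' hs0, Finsupp.sup_apply, le_sup_iff] at h0
        rwa [hp.pow_dvd_iff_le_factorization (h.pos a).ne', hp.pow_dvd_iff_le_factorization hs0]
      rcases hor with h0 | h0
      · exact Or.inr ⟨a, h0⟩
      · exact ih h0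
  rcases h3 _ h2 with h0 | ⟨i, hi⟩
  · simp [h0]
  · exact h.dvd_mult_m' i _ hi hk

theorem mult_bound (h : GData d g v m A) : multOf v * (Finset.univ.lcm A) ^ 2 ≤ ∏ i, A i := by
  obtain ⟨c, hc⟩ := h.dvd_mult_m
  have h1 := h.mult_mul
  have hP : 0 < ∏ i, A i := Finset.prod_pos fun i _ => h.pos i
  have hg := h.gpos
  rw [hc] at h1
  have h2 : g * (multOf v * (Finset.univ.lcm A) ^ 2 * c) = g * ∏ i, A i := by rw [← h1]; ring
  have h3 := Nat.eq_of_mul_eq_mul_left hg h2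
  have hc0 : 0 < c := by
    rcases Nat.eq_zero_or_pos c with h0 | h0
    · simp [h0] at h3; omega
    · exact h0
  rw [← h3]
  exact Nat.le_mul_of_pos_right _ hc0

/-- permutation invariance -/
theorem perm (h : GData d g v m A) (σ : Equiv.Perm (Fin (d + 1))) :
    GData d g (v ∘ σ) (m ∘ σ) (A ∘ σ) where
  gpos := h.gpos
  pos i := h.pos _
  pair i k := by
    simp only [Function.comp]
    rw [h.pair]; simp
  sum := by
    rw [← h.sum]; exact Equiv.sum_comp σ fun i => 1 / (A i : ℚ)
  bal j := by
    rw [← h.bal j]; exact Equiv.sum_comp σ fun i => (v i j : ℚ) / A i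
  prim i := h.prim _

end GData

theorem multOf_perm {d : ℕ} (v : Fin (d + 1) → Fin d → ℤ) (σ : Equiv.Perm (Fin (d + 1))) :
    multOf (v ∘ σ) = multOf v := by
  rw [multOf, multOf, EquivLike.range_comp]

theorem iso_perm {d : ℕ} {v : Fin (d + 1) → Fin d → ℤ} {σ : Equiv.Perm (Fin (d + 1))}
    {w : Fin (d + 1) → Fin d → ℚ} (h : IsIsomorphicToQ (v ∘ σ) w) : IsIsomorphicToQ v w := by
  obtain ⟨U, τ, hU, h⟩ := h
  refine ⟨U, σ.symm.trans τ, hU, fun i => ?_⟩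
  have := h (σ.symm i)
  simpa using this

theorem exists_sorted {d : ℕ} (A : Fin (d + 1) → ℕ) : ∃ σ : Equiv.Perm (Fin (d + 1)), Monotone (A ∘ σ) :=
  ⟨Tuple.sort A, Tuple.monotone_sort A⟩

namespace GData
variable {d g : ℕ} {v m : Fin (d + 1) → Fin d → ℤ} {A : Fin (d + 1) → ℕ}

/-- the bound, with equality data, for sorted data -/
theorem bound_sorted (h : GData d g v m A) (hd : 2 ≤ d) (hmono : Monotone A)
    (h31 : ¬(d = 3 ∧ g = 1)) (h32 : ¬(d = 3 ∧ g = 2)) (h41 : ¬(d = 4 ∧ g = 1)) :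
    ((multOf v : ℚ) ≤ 3 * (tsylv g (d - 1) : ℚ) ^ 2 / (g : ℚ)) ∧
      ((multOf v : ℚ) = 3 * (tsylv g (d - 1) : ℚ) ^ 2 / (g : ℚ) →
        ((∀ i : Fin (d+1), i.val < d - 2 → A i = sylv g (i.val + 1)) ∧
          (∀ i : Fin (d+1), d - 2 ≤ i.val → A i = 3 * tsylv g (d - 1))) ∨
        (d = 3 ∧ g = 3 ∧ ∀ i, A i = 12)) := by
  set B : ℕ → ℕ := fun i => if hi : i < d + 1 then A ⟨i, hi⟩ else 1 with hB
  have hBA : ∀ i : Fin (d+1), B i.val = A i := fun i => by simp only [hB, i.2, dif_pos]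
  have hBpos : ∀ i < d + 1, 1 ≤ B i := by
    intro i hi
    have := hBA ⟨i, hi⟩
    simp only at this
    rw [this]; exact h.pos _
  have hBmono : ∀ i, i + 1 < d + 1 → B i ≤ B (i+1) := by
    intro i hi
    have h1 := hBA ⟨i, by omega⟩
    have h2 := hBA ⟨i+1, hi⟩
    simp only at h1 h2
    rw [h1, h2]
    exact hmono (by simp [Fin.le_def])
  have hBsumQ : ∑ i ∈ range (d+1), 1 / (B i : ℚ) = 1 / g := by
    rw [← Fin.sum_univ_eq_sum_range (fun i => 1 / (B i : ℚ)), ← h.sum]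
    simp only [hBA]
  have hBsum : ∑ i ∈ range (d+1), 1 / (B i : ℝ) = 1 / g := by
    have : ((∑ i ∈ range (d+1), 1 / (B i : ℚ) : ℚ) : ℝ) = ((1 / g : ℚ) : ℝ) := by rw [hBsumQ]
    push_cast at this
    exact this
  obtain ⟨hle, heq⟩ := core B g d (h.gpos) hd h31 h32 h41 hBpos hBmono hBsum
  have hprodA : ∏ i, A i = (∏ i ∈ range (d-1), B i) * (B (d-1) * B d) := by
    have : ∏ i, A i = ∏ i ∈ range (d+1), B i := by
      rw [← Fin.prod_univ_eq_prod_range]; simp only [hBA]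
    rw [this, Finset.prod_range_succ, ← mul_assoc]
    obtain ⟨e, rfl⟩ : ∃ e, d = e + 1 := ⟨d-1, by omega⟩
    rw [Finset.prod_range_succ]
    simp
  have hlcm1 : B d ≤ Finset.univ.lcm A := by
    have := hBA (Fin.last d)
    simp only [Fin.val_last] at this
    rw [this]
    exact Nat.le_of_dvd h.lcm_pos (Finset.dvd_lcm (Finset.mem_univ _))
  have hlcm2 : B (d-1) ≤ B d := by
    have := hBmono (d-1) (by omega)
    rwa [Nat.sub_add_cancel (by omega)] at this
  have hmain : multOf v ≤ ∏ i ∈ range (d-1), B i := by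
    have h1 := h.mult_bound
    rw [hprodA] at h1
    have h2 : B (d-1) * B d ≤ (Finset.univ.lcm A)^2 := by
      rw [pow_two]; exact Nat.mul_le_mul (hlcm2.trans hlcm1) hlcm1
    have h3 : multOf v * (Finset.univ.lcm A) ^ 2 ≤ (∏ i ∈ range (d-1), B i) * (Finset.univ.lcm A)^2 :=
      h1.trans (Nat.mul_le_mul_left _ h2)
    exact Nat.le_of_mul_le_mul_right h3 (pow_pos h.lcm_pos 2)
  have hmainR : (multOf v : ℝ) ≤ ∏ i ∈ range (d-1), (B i : ℝ) := by exact_mod_cast hmain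
  constructor
  · have : (multOf v : ℝ) ≤ 3 * (tsylv g (d - 1) : ℝ) ^ 2 / (g : ℝ) := hmainR.trans hle
    have h' : (((multOf v : ℚ)) : ℝ) ≤ ((3 * (tsylv g (d - 1) : ℚ) ^ 2 / (g : ℚ) : ℚ) : ℝ) := by
      push_cast; exact this
    exact Rat.cast_le.1 h'
  · intro he
    have heR : (multOf v : ℝ) = 3 * (tsylv g (d - 1) : ℝ) ^ 2 / (g : ℝ) := by
      have h' : (((multOf v : ℚ)) : ℝ) = ((3 * (tsylv g (d - 1) : ℚ) ^ 2 / (g : ℚ) : ℚ) : ℝ) := by rw [he]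
      push_cast at h'; exact h'
    have := heq (le_antisymm hle (by rw [← heR]; exact hmainR))
    rcases this with ⟨ha, hb⟩ | ⟨ha, hb, hc⟩
    · left
      refine ⟨fun i hi => ?_, fun i hi => ?_⟩
      · rw [← hBA]; exact ha _ hi
      · rw [← hBA]; exact hb _ hi i.2
    · right
      refine ⟨ha, hb, fun i => ?_⟩
      rw [← hBA]; exact hc _ (by omega)

end GData

theorem mem_dualBody_iff {d : ℕ} (v : Fin (d + 1) → Fin d → ℚ) (u : Fin d → ℚ) :
    u ∈ dualBody (simplexHull v) ↔ ∀ i, -1 ≤ ∑ j, u j * v i j := by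
  constructor
  · intro h i
    exact h _ (subset_convexHull ℚ _ ⟨i, rfl⟩)
  · intro h x hx
    have hc : Convex ℚ {x : Fin d → ℚ | -1 ≤ ∑ j, u j * x j} := by
      apply convex_halfSpace_ge (f := fun x : Fin d → ℚ => ∑ j, u j * x j)
      constructor
      · intro x y; simp [mul_add, Finset.sum_add_distrib]
      · intro c x; simp only [Pi.smul_apply, smul_eq_mul, Finset.mul_sum]
        exact Finset.sum_congr rfl fun i _ => by ring
    have hsub : Set.range v ⊆ {x : Fin d → ℚ | -1 ≤ ∑ j, u j * x j} := by
      rintro _ ⟨i, rfl⟩; exact h i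
    exact convexHull_min hsub hc hx

theorem lattice_vertex {d : ℕ} (v : Fin (d + 1) → Fin d → ℚ) (c : ℚ)
    (hL : IsLatticeSet (c • dualBody (simplexHull v))) (hc : 0 < c) (j : Fin (d + 1)) (u : Fin d → ℚ)
    (hu : ∀ i, ∑ k, u k * v (j.succAbove i) k = -1) (huj : -1 ≤ ∑ k, u k * v j k)
    (huniq : ∀ x : Fin d → ℚ, (∀ i, ∑ k, x k * v (j.succAbove i) k = -c) → x = c • u) :
    ∀ k, ∃ z : ℤ, c * u k = z := by
  have humem : u ∈ dualBody (simplexHull v) := by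
    rw [mem_dualBody_iff]
    intro i
    rcases Fin.eq_self_or_eq_succAbove j i with rfl | ⟨k, rfl⟩
    · exact huj
    · rw [hu]
  have h1 : c • u ∈ c • dualBody (simplexHull v) := Set.smul_mem_smul_set humem
  by_contra hcon
  set H : Set (Fin d → ℚ) := {x | -(c * d) < ∑ i, ∑ k, x k * v (j.succAbove i) k} with hH
  have hconv : Convex ℚ H := by
    apply convex_halfSpace_gt (f := fun x : Fin d → ℚ => ∑ i, ∑ k, x k * v (j.succAbove i) k)
    constructor
    · intro x y; simp [add_mul, Finset.sum_add_distrib]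
    · intro c x; simp only [Pi.smul_apply, smul_eq_mul, Finset.mul_sum]
      exact Finset.sum_congr rfl fun i _ => Finset.sum_congr rfl fun i _ => by ring
  have hsub : {x ∈ c • dualBody (simplexHull v) | ∀ j, ∃ z : ℤ, x j = (z : ℚ)} ⊆ H := by
    rintro x ⟨hx, hxz⟩
    obtain ⟨y, hy, rfl⟩ := hx
    rw [mem_dualBody_iff] at hy
    have hge : ∀ i : Fin d, -c ≤ ∑ k, (c • y) k * v (j.succAbove i) k := by
      intro i
      have := hy (j.succAbove i)
      have e : ∑ k, (c • y) k * v (j.succAbove i) k = c * ∑ k, y k * v (j.succAbove i) k := by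
        rw [Finset.mul_sum]
        exact Finset.sum_congr rfl fun i _ => by simp [mul_assoc]
      rw [e]; nlinarith
    have hsum : ∑ _i : Fin d, (-c) = -(c * d) := by simp; ring
    rw [hH, Set.mem_ofPred_eq, ← hsum]
    by_contra hnot
    rw [not_lt] at hnot
    have heq := le_antisymm (Finset.sum_le_sum fun i (_ : i ∈ Finset.univ) => hge i) hnot
    have heq' := (Finset.sum_eq_sum_iff_of_le fun i (_ : i ∈ Finset.univ) => hge i).1 heq
    have := huniq (c • y) fun i => (heq' i (Finset.mem_univ i)).symm
    apply hcon
    intro k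
    have h2 := hxz k
    change ∃ z : ℤ, (c • y) k = z at h2
    rw [this] at h2
    exact h2
  rw [hL] at h1
  have h2 := convexHull_min hsub hconv h1
  have e : ∑ i, ∑ k, (c • u) k * v (j.succAbove i) k = -(c * d) := by
    have : ∀ i, ∑ k, (c • u) k * v (j.succAbove i) k = -c := by
      intro i
      have e : ∑ k, (c • u) k * v (j.succAbove i) k = c * ∑ k, u k * v (j.succAbove i) k := by
        rw [Finset.mul_sum]
        exact Finset.sum_congr rfl fun i _ => by simp [mul_assoc]
      rw [e, hu]; ring
    simp only [this]; simp; ring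
  rw [hH, Set.mem_ofPred_eq, e] at h2
  exact lt_irrefl _ h2

theorem det_ne_of_affine {d : ℕ} (v : Fin (d + 1) → Fin d → ℚ) (hA : AffineIndependent ℚ v)
    (w : Fin (d + 1) → ℚ) (hw : ∀ i, 0 < w i) (hs : ∑ i, w i = 1) (hb : ∀ j, ∑ i, w i * v i j = 0)
    (j : Fin (d + 1)) : (Matrix.of fun i => v (j.succAbove i)).det ≠ 0 := by
  intro h0
  obtain ⟨c, hc0, hc⟩ := Matrix.exists_vecMul_eq_zero_iff.2 h0
  rw [affineIndependent_iff] at hA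
  set c' : Fin (d + 1) → ℚ := fun i => j.insertNth (α := fun _ => ℚ) 0 c i - (∑ k, c k) * w i with hc'
  have hs' : ∑ i, c' i = 0 := by
    rw [hc', Finset.sum_sub_distrib, ← Finset.mul_sum, hs, Fin.sum_univ_succAbove _ j]
    simp
  have hb' : ∑ i, c' i • v i = 0 := by
    funext k
    simp only [hc', Finset.sum_apply, Pi.smul_apply, smul_eq_mul, sub_mul, Finset.sum_sub_distrib, mul_assoc,
      ← Finset.mul_sum, hb, Pi.zero_apply]
    rw [Fin.sum_univ_succAbove _ j]
    simp only [Fin.insertNth_apply_same, Fin.insertNth_apply_succAbove]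
    have := congrFun hc k
    simp only [Matrix.vecMul, dotProduct, Matrix.of_apply, Pi.zero_apply] at this
    rw [this]; ring
  have h2 := hA Finset.univ c' hs' hb'
  have h3 := h2 j (Finset.mem_univ j)
  simp only [hc', Fin.insertNth_apply_same] at h3
  have h4 : ∑ k, c k = 0 := by
    have := (hw j).ne'
    have h5 : (∑ k, c k) * w j = 0 := by linarith
    rcases mul_eq_zero.1 h5 with h6 | h6
    · exact h6
    · exact absurd h6 this
  apply hc0
  funext i
  have h5 := h2 (j.succAbove i) (Finset.mem_univ _)
  simp only [hc', Fin.insertNth_apply_succAbove, h4] at h5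
  simpa using h5

theorem exists_data {d g : ℕ} (hg : 1 ≤ g) (v : Fin (d + 1) → Fin d → ℤ) (hF : IsFanoSimplex v)
    (hG : gorensteinIndex (fun i => toQ (v i)) = g) :
    ∃ (m : Fin (d + 1) → Fin d → ℤ) (A : Fin (d + 1) → ℕ), GData d g v m A := by
  obtain ⟨hA, hprim, w, hw, hs, hb⟩ := hF
  have hlat : IsLatticeSet ((g : ℚ) • dualBody (simplexHull fun i => toQ (v i))) := by
    have hne : {g : ℕ | 0 < g ∧ IsLatticeSet ((g : ℚ) • dualBody (simplexHull fun i => toQ (v i)))}.Nonempty := by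
      by_contra hcon
      rw [Set.not_nonempty_iff_eq_empty] at hcon
      rw [gorensteinIndex, hcon, Nat.sInf_empty] at hG
      omega
    have := Nat.sInf_mem hne
    rw [gorensteinIndex] at hG
    rw [hG] at this
    exact this.2
  have hdet := det_ne_of_affine _ hA w hw hs hb
  have hgQ : (0:ℚ) < g := by exact_mod_cast hg
  have key : ∀ j, ∃ m : Fin d → ℤ, (∀ i, ∑ k, (m k : ℚ) * v (j.succAbove i) k = -g) ∧
      ∑ k, (m k : ℚ) * v j k = g / w j - g := by
    intro j
    set M : Matrix (Fin d) (Fin d) ℚ := Matrix.of fun i => toQ (v (j.succAbove i)) with hM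
    have hMu : IsUnit M.det := isUnit_iff_ne_zero.2 (hdet j)
    set u : Fin d → ℚ := M⁻¹.mulVec (fun _ => -1) with hu
    have hMuu : M.mulVec u = fun _ => -1 := by
      rw [hu, Matrix.mulVec_mulVec, Matrix.mul_nonsing_inv _ hMu, Matrix.one_mulVec]
    have h1 : ∀ i, ∑ k, u k * toQ (v (j.succAbove i)) k = -1 := by
      intro i
      have := congrFun hMuu i
      simp only [Matrix.mulVec, dotProduct, hM, Matrix.of_apply] at this
      rw [← this]
      exact Finset.sum_congr rfl fun _ _ => mul_comm _ _
    have h2 : ∑ k, u k * toQ (v j) k = 1 / w j - 1 := by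
      have hz : ∑ i, w i * ∑ k, u k * toQ (v i) k = 0 := by
        simp only [Finset.mul_sum]
        rw [Finset.sum_comm]
        apply Finset.sum_eq_zero
        intro k _
        have := hb k
        have e : ∑ i, w i * (u k * toQ (v i) k) = u k * ∑ i, w i * toQ (v i) k := by
          rw [Finset.mul_sum]; exact Finset.sum_congr rfl fun _ _ => by ring
        rw [e, this, mul_zero]
      rw [Fin.sum_univ_succAbove _ j] at hz hs
      simp only [h1, mul_neg, mul_one, Finset.sum_neg_distrib] at hz
      have := (hw j).ne'
      field_simp
      linarith
    have h3 := lattice_vertex _ (g:ℚ) hlat hgQ j u h1 (by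
      rw [h2]
      have := one_div_pos.2 (hw j)
      linarith) (by
      intro x hx
      have : M.mulVec (x - (g:ℚ) • u) = 0 := by
        rw [Matrix.mulVec_sub, Matrix.mulVec_smul, hMuu]
        funext i
        simp only [Pi.sub_apply, Pi.smul_apply, smul_eq_mul, Pi.zero_apply, Matrix.mulVec, dotProduct, hM,
          Matrix.of_apply]
        have := hx i
        simp only [mul_comm (x _)] at this
        rw [this]; ring
      exact sub_eq_zero.1 (Matrix.eq_zero_of_mulVec_eq_zero (hdet j) this))
    choose m hm using h3
    refine ⟨m, fun i => ?_, ?_⟩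
    · have e : ∑ k, (m k : ℚ) * v (j.succAbove i) k = g * ∑ k, u k * toQ (v (j.succAbove i)) k := by
        rw [Finset.mul_sum]
        exact Finset.sum_congr rfl fun k _ => by rw [← hm k, toQ]; ring
      rw [e, h1]; ring
    · have e : ∑ k, (m k : ℚ) * v j k = g * ∑ k, u k * toQ (v j) k := by
        rw [Finset.mul_sum]
        exact Finset.sum_congr rfl fun k _ => by rw [← hm k, toQ]; ring
      rw [e, h2]; ring
  choose m hm1 hm2 using key
  have hAQ : ∀ i, (((∑ k, m i k * v i k + g).toNat : ℕ) : ℚ) = g / w i := by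
    intro i
    have e : ((∑ k, m i k * v i k + g : ℤ) : ℚ) = g / w i := by
      push_cast
      rw [hm2]; ring
    have hpos : (0:ℚ) < g / w i := div_pos hgQ (hw i)
    have hpos' : (0 : ℤ) ≤ ∑ k, m i k * v i k + g := by
      rw [← e] at hpos
      exact (Int.cast_pos.1 hpos).le
    rw [← e]
    have := Int.toNat_of_nonneg hpos'
    exact_mod_cast congrArg (Int.cast : ℤ → ℚ) this
  have hApos : ∀ i, 0 < (∑ k, m i k * v i k + g).toNat := by
    intro i
    have : (0:ℚ) < g / w i := div_pos hgQ (hw i)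
    rw [← hAQ] at this
    exact_mod_cast this
  refine ⟨m, fun i => (∑ k, m i k * v i k + g).toNat, hg, hApos, ?_, ?_, ?_, hprim⟩
  · intro i k
    by_cases hik : i = k
    · subst hik
      rw [if_pos rfl]
      have := hApos i
      rw [Int.toNat_of_nonneg (by omega)]
      ring
    · rw [if_neg hik]
      rcases Fin.eq_self_or_eq_succAbove i k with h | ⟨l, rfl⟩
      · exact absurd h.symm hik
      · have := hm1 i l
        have : ((∑ j, m i j * v (i.succAbove l) j : ℤ) : ℚ) = ((0 - (g:ℤ) : ℤ) : ℚ) := by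
          push_cast; rw [this]; ring
        exact_mod_cast this
  · simp only [hAQ]
    have : ∀ i, 1 / ((g:ℚ) / w i) = w i * (1 / g) := fun i => by
      have := (hw i).ne'
      field_simp
    simp only [this, ← Finset.sum_mul, hs, one_mul]
  · intro j
    simp only [hAQ]
    have : ∀ i, (v i j : ℚ) / ((g:ℚ) / w i) = w i * toQ (v i) j * (1 / g) := fun i => by
      have := (hw i).ne'
      rw [toQ]
      field_simp
    simp only [this, ← Finset.sum_mul, hb, zero_mul]

/-- Sylvester numbers indexed from zero, their products and partial products -/
def sy (g k : ℕ) : ℕ := sylv g (k + 1)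
def sP (g n : ℕ) : ℕ := ∏ k ∈ range n, sy g k
def sE (g n k : ℕ) : ℕ := ∏ j ∈ (range n).erase k, sy g j

theorem sy_pos (g k : ℕ) : 0 < sy g k := by
  rw [sy, ts_sylv]; omega

theorem sP_pos (g n : ℕ) : 0 < sP g n := Finset.prod_pos fun _ _ => sy_pos _ _

theorem sE_pos (g n k : ℕ) : 0 < sE g n k := Finset.prod_pos fun _ _ => sy_pos _ _

theorem tsylv_eq (g n : ℕ) : tsylv g (n + 1) = g * sP g n := by
  induction n with
  | zero => simp [sP, ts_one]
  | succ n ih =>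
    rw [ts_succ, ih, sP, sP, Finset.prod_range_succ, sy, ts_sylv, ih, sP]; ring

theorem sy_eq (g n : ℕ) : sy g n = g * sP g n + 1 := by
  rw [sy, ts_sylv, tsylv_eq]

theorem sE_mul (g n k : ℕ) (hk : k < n) : sE g n k * sy g k = sP g n :=
  Finset.prod_erase_mul _ _ (Finset.mem_range.2 hk)

theorem dvd_sE (g n k i : ℕ) (hi : i < n) (hik : i ≠ k) : sy g i ∣ sE g n k :=
  Finset.dvd_prod_of_mem _ (Finset.mem_erase.2 ⟨hik, Finset.mem_range.2 hi⟩)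

theorem sE_succ (g n k : ℕ) (hk : k < n) : sE g (n + 1) k = sE g n k * sy g n := by
  apply Nat.eq_of_mul_eq_mul_right (sy_pos g k)
  rw [sE_mul _ _ _ (by omega), mul_right_comm, sE_mul _ _ _ hk, sP, sP, Finset.prod_range_succ]

theorem sE_self (g n : ℕ) : sE g (n + 1) n = sP g n := by
  apply Nat.eq_of_mul_eq_mul_right (sy_pos g n)
  rw [sE_mul _ _ _ (by omega), sP, sP, Finset.prod_range_succ]

theorem dvd_sE_add_one (g n k : ℕ) (hk : k < n) : sy g k ∣ g * sE g n k + 1 := by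
  induction n with
  | zero => omega
  | succ n ih =>
    rcases Nat.lt_succ_iff_lt_or_eq.1 hk with h | h
    · have h1 := ih h
      rw [sE_succ _ _ _ h, sy_eq g n, ← sE_mul g n k h]
      have : g * (sE g n k * (g * (sE g n k * sy g k) + 1)) + 1
         = (g * sE g n k + 1) + sy g k * (g * sE g n k * (g * sE g n k)) := by ring
      rw [this]
      exact dvd_add h1 (dvd_mul_right _ _)
    · subst h
      rw [sE_self, ← sy_eq]

theorem sE_sum (g n : ℕ) : g * (∑ k ∈ range n, sE g n k) + 1 = sP g n := by
  induction n with
  | zero => simp [sP]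
  | succ n ih =>
    rw [Finset.sum_range_succ, sE_self]
    have : ∑ k ∈ range n, sE g (n + 1) k = (∑ k ∈ range n, sE g n k) * sy g n := by
      rw [Finset.sum_mul]
      exact Finset.sum_congr rfl fun k hk => sE_succ _ _ _ (Finset.mem_range.1 hk)
    rw [this]
    have h2 : sP g (n+1) = sP g n * sy g n := by rw [sP, sP, Finset.prod_range_succ]
    rw [h2]
    nth_rewrite 2 [← ih]
    have := sy_eq g n
    calc g * ((∑ k ∈ range n, sE g n k) * sy g n + sP g n) + 1 
        = g * (∑ k ∈ range n, sE g n k) * sy g n + (g * sP g n + 1) := by ring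
      _ = _ := by rw [← this]; ring

/-- inverse matrix entries -/
theorem exists_coef (g n k : ℕ) (hk : k < n) : ∃ c : ℕ → ℤ,
    (∀ i < n, c i * sy g i = (if i = k then 1 else 0) + g * sE g n k) ∧
      ∑ i ∈ range n, c i = sE g n k := by
  have h1 : ∀ i, ∃ c : ℤ, i < n → c * sy g i = (if i = k then 1 else 0) + g * sE g n k := by
    intro i
    by_cases hi : i < n
    · by_cases hik : i = k
      · subst hik
        obtain ⟨c, hc⟩ := dvd_sE_add_one g n i hi
        refine ⟨c, fun _ => ?_⟩
        rw [if_pos rfl]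
        have : ((g * sE g n i + 1 : ℕ) : ℤ) = ((sy g i * c : ℕ) : ℤ) := by rw [hc]
        push_cast at this
        linarith
      · obtain ⟨c, hc⟩ := dvd_sE g n k i hi hik
        refine ⟨g * c, fun _ => ?_⟩
        rw [if_neg hik, hc]
        push_cast; ring
    · exact ⟨0, fun h => absurd h hi⟩
  choose c hc using h1
  refine ⟨c, hc, ?_⟩
  have hP : (0:ℤ) < sP g n := by exact_mod_cast sP_pos g n
  apply mul_right_cancel₀ hP.ne'
  have hs : (g : ℤ) * (∑ k ∈ range n, (sE g n k : ℤ)) + 1 = sP g n := by exact_mod_cast sE_sum g n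
  calc (∑ i ∈ range n, c i) * (sP g n : ℤ) = ∑ i ∈ range n, ((if i = k then (1:ℤ) else 0) + g * sE g n k) * (sE g n i : ℤ) := by
        rw [Finset.sum_mul]
        apply Finset.sum_congr rfl
        intro i hi
        have hi := Finset.mem_range.1 hi
        rw [← hc i hi, ← sE_mul g n i hi]
        push_cast; ring
    _ = sE g n k + g * sE g n k * ∑ i ∈ range n, (sE g n i : ℤ) := by
        simp only [add_mul, Finset.sum_add_distrib, Finset.mul_sum]
        congr 1
        simp [hk]
    _ = sE g n k * sP g n := by rw [← hs]; ring

theorem pairHom_bal {d g : ℕ} {v m : Fin (d + 1) → Fin d → ℤ} {A : Fin (d + 1) → ℕ} (h : GData d g v m A)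
    (x : Fin d → ℤ) : ∑ i, (pairHom (v i) x : ℚ) / A i = 0 := by
  have : ∀ i, (pairHom (v i) x : ℚ) / A i = ∑ j, (x j : ℚ) * ((v i j : ℚ) / A i) := by
    intro i
    rw [pairHom_apply, Int.cast_sum, Finset.sum_div]
    exact Finset.sum_congr rfl fun j _ => by push_cast; ring
  simp only [this]
  rw [Finset.sum_comm]
  simp only [← Finset.mul_sum, h.bal, mul_zero, Finset.sum_const_zero]

/-- If `U` (given by rows) maps the simplex to a matrix with determinant equal to the multiplicity, it is
unimodular. -/
theorem unimod_of_rows {d g : ℕ} {v m : Fin (d + 1) → Fin d → ℤ} {A : Fin (d + 1) → ℕ} (h : GData d g v m A)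
    (U : Matrix (Fin d) (Fin d) ℤ) (hw : GData.wt A (Fin.last d) = 1)
    (hdet : (Matrix.of fun j i : Fin d => pairHom (v i.castSucc) (U j)).det = multOf v)
    (hm : multOf v ≠ 0) :
    IsUnit U.det := by
  have e : (Matrix.of fun j i : Fin d => pairHom (v i.castSucc) (U j)) =
      U * (Matrix.of fun i => v ((Fin.last d).succAbove i)).transpose := by
    ext j i
    simp [Matrix.mul_apply, pairHom_apply]
  rw [e, Matrix.det_mul, Matrix.det_transpose] at hdet
  have h1 := h.det_v (Fin.last d)
  rw [hw, one_mul] at h1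
  have h2 := congrArg Int.natAbs hdet
  rw [Int.natAbs_mul, h1, Int.natAbs_natCast] at h2
  have h3 : U.det.natAbs = 1 := by
    apply Nat.eq_of_mul_eq_mul_right (Nat.pos_of_ne_zero hm)
    rw [h2, one_mul]
  exact Int.isUnit_iff_natAbs_eq.2 h3

theorem mulVec_eq_pairHom {d : ℕ} (U : Matrix (Fin d) (Fin d) ℤ) (x : Fin d → ℤ) (j : Fin d) :
    (U.map (Int.cast : ℤ → ℚ)).mulVec (toQ x) j = (pairHom x (U j) : ℚ) := by
  rw [pairHom_apply]
  simp [Matrix.mulVec, dotProduct, toQ]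

theorem iso_main {n g : ℕ} {v m : Fin (n + 2 + 1) → Fin (n + 2) → ℤ} {A : Fin (n + 2 + 1) → ℕ}
    (h : GData (n + 2) g v m A) 
    (hA1 : ∀ i : Fin (n + 2 + 1), i.val < n → A i = sy g i.val)
    (hA2 : ∀ i : Fin (n + 2 + 1), n ≤ i.val → A i = 3 * (g * sP g n))
    (hmult : multOf v = 3 * g * sP g n * sP g n) :
    ∃ a : ℕ → ℤ, (∀ k, 1 ≤ k → k ≤ n + 1 → 1 ≤ a k) ∧
      IsIsomorphicToQ v (PgenMult g (n + 2) fun k => (a k : ℚ)) := by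
  have hg := h.gpos
  set τ : ℕ := sP g n with hτ
  have hτ0 : 0 < τ := sP_pos g n
  -- embedding of indices
  set ix : ℕ → Fin (n + 2 + 1) := fun i => ⟨min i (n+2), by omega⟩ with hix
  have hixval : ∀ i, i ≤ n + 2 → (ix i).val = i := fun i hi => by simp [hix, hi]
  have hpair : ∀ i k : Fin (n+2+1), pairHom (v k) (m i) = (if i = k then (A i : ℤ) else 0) - g := h.pair
  -- the functionals
  have hF : ∀ k, ∃ F : Fin (n+2) → ℤ, k < n → ∀ i : Fin (n+2+1), pairHom (v i) F =
      if i.val < n then (if i.val = k then 1 else 0) else -((g:ℤ) * sE g n k) := by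
    intro k
    by_cases hk : k < n
    swap
    · exact ⟨0, fun h => absurd h hk⟩
    obtain ⟨c, hc1, hc2⟩ := exists_coef g n k hk
    refine ⟨∑ j ∈ range n, c j • m (ix j), fun _ i => ?_⟩
    have e : ∀ j ∈ range n, c j * pairHom (v i) (m (ix j)) =
        (if j = i.val then c j * sy g j else 0) - c j * g := by
      intro j hj
      have hj := Finset.mem_range.1 hj
      rw [hpair]
      have : (ix j = i) ↔ (j = i.val) := by
        rw [Fin.ext_iff, hixval _ (by omega)]
      have hAj : A (ix j) = sy g j := by
        rw [hA1 _ (by rw [hixval _ (by omega)]; exact hj), hixval _ (by omega)]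
      simp only [this, hAj]
      split_ifs <;> ring
    rw [map_sum]
    simp only [map_zsmul, smul_eq_mul]
    rw [Finset.sum_congr rfl e, Finset.sum_sub_distrib, ← Finset.sum_mul, hc2, Finset.sum_ite_eq']
    by_cases hi : i.val < n
    · rw [if_pos (Finset.mem_range.2 hi), if_pos hi, hc1 _ hi]; ring
    · rw [if_neg (by rw [Finset.mem_range]; exact hi), if_neg hi]; ring
  choose F hF using hF
  obtain ⟨y, hy⟩ := prim_bezout (h.prim (ix n))
  replace hy : pairHom (v (ix n)) y = 1 := hy
  set z : ℤ := ∑ k ∈ range n, pairHom (v (ix k)) y * sE g n k with hz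
  set y' : Fin (n+2) → ℤ := y - ∑ k ∈ range n, pairHom (v (ix k)) y • F k with hy'
  have hy1 : ∀ i : Fin (n+2+1), i.val < n → pairHom (v i) y' = 0 := by
    intro i hi
    rw [hy', map_sub, map_sum]
    simp only [map_zsmul, smul_eq_mul]
    have e : ∀ k ∈ range n, pairHom (v (ix k)) y * pairHom (v i) (F k) =
        if i.val = k then pairHom (v (ix k)) y else 0 := by
      intro k hk
      rw [hF k (Finset.mem_range.1 hk), if_pos hi]
      split_ifs <;> ring
    rw [Finset.sum_congr rfl e, Finset.sum_ite_eq, if_pos (Finset.mem_range.2 hi)]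
    have : ix i.val = i := Fin.ext (hixval _ (by omega))
    rw [this, sub_self]
  have hvn : (ix n).val = n := hixval _ (by omega)
  have hvn1 : (ix (n+1)).val = n + 1 := hixval _ (by omega)
  have hvn2 : (ix (n+2)).val = n + 2 := hixval _ (by omega)
  have hy2 : pairHom (v (ix n)) y' = 1 + g * z := by
    rw [hy', map_sub, map_sum, hy]
    simp only [map_zsmul, smul_eq_mul]
    have e : ∀ k ∈ range n, pairHom (v (ix k)) y * pairHom (v (ix n)) (F k) =
        - (g * (pairHom (v (ix k)) y * sE g n k)) := by
      intro k hk
      rw [hF k (Finset.mem_range.1 hk), if_neg (by omega)]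
      ring
    rw [Finset.sum_congr rfl e, Finset.sum_neg_distrib, ← Finset.mul_sum, hz]; ring
  set M : Fin (n+2) → ℤ := m (ix (n+1)) + (g:ℤ) • ∑ k ∈ range n, F k with hM
  have hM1 : ∀ i : Fin (n+2+1), i.val < n → pairHom (v i) M = 0 := by
    intro i hi
    rw [hM, map_add, map_zsmul, map_sum, hpair, if_neg (by rw [Fin.ext_iff]; omega)]
    have e : ∀ k ∈ range n, pairHom (v i) (F k) = if i.val = k then 1 else 0 := by
      intro k hk
      rw [hF k (Finset.mem_range.1 hk), if_pos hi]
    rw [Finset.sum_congr rfl e, Finset.sum_ite_eq, if_pos (Finset.mem_range.2 hi)]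
    simp
  have hM2 : pairHom (v (ix n)) M = - (g * τ) := by
    rw [hM, map_add, map_zsmul, map_sum, hpair, if_neg (by rw [Fin.ext_iff]; omega)]
    have e : ∀ k ∈ range n, pairHom (v (ix n)) (F k) = -(g * sE g n k) := by
      intro k hk
      rw [hF k (Finset.mem_range.1 hk), if_neg (by omega)]
    rw [Finset.sum_congr rfl e, Finset.sum_neg_distrib, ← Finset.mul_sum]
    have := sE_sum g n
    have : (g : ℤ) * (∑ k ∈ range n, (sE g n k : ℤ)) + 1 = τ := by exact_mod_cast this
    rw [← this, smul_eq_mul]; ring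
  set H : Fin (n+2) → ℤ := (τ:ℤ) • y' + z • M with hH
  have hH1 : ∀ i : Fin (n+2+1), i.val < n → pairHom (v i) H = 0 := by
    intro i hi
    rw [hH, map_add, map_zsmul, map_zsmul, hy1 i hi, hM1 i hi]; simp
  have hH2 : pairHom (v (ix n)) H = τ := by
    rw [hH, map_add, map_zsmul, map_zsmul, hy2, hM2, smul_eq_mul, smul_eq_mul]; ring
  set a : ℤ := pairHom (v (ix (n+1))) H with ha
  have hH3 : pairHom (v (ix (n+2))) H = - (τ + a) := by
    have h1 := pairHom_bal h H
    rw [Fin.sum_univ_castSucc, Fin.sum_univ_castSucc, Fin.sum_univ_castSucc] at h1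
    have e0 : ∀ i : Fin n, ((pairHom (v i.castSucc.castSucc.castSucc) H : ℤ) : ℚ) / 
        (A i.castSucc.castSucc.castSucc : ℚ) = 0 := by
      intro i
      rw [hH1 _ (by simp)]; simp
    rw [Finset.sum_eq_zero fun i _ => e0 i] at h1
    have e1 : (Fin.last n).castSucc.castSucc = ix n := Fin.ext (by rw [hvn]; simp)
    have e2 : (Fin.last (n+1)).castSucc = ix (n+1) := Fin.ext (by rw [hvn1]; simp)
    have e3 : Fin.last (n+2) = ix (n+2) := Fin.ext (by rw [hvn2]; simp)
    rw [e1, e2, e3, hA2 (ix n) (by omega), hA2 (ix (n+1)) (by omega), hA2 (ix (n+2)) (by omega), hH2, ← ha] at h1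
    have hne : ((3 * (g * τ) : ℕ) : ℚ) ≠ 0 := by positivity
    rw [zero_add, ← add_div, ← add_div, div_eq_zero_iff] at h1
    rcases h1 with h1 | h1
    · have : (τ : ℤ) + a + pairHom (v (ix (n+2))) H = 0 := by exact_mod_cast h1
      linarith
    · exact absurd h1 hne
  set q : Fin (n+2) → ℤ := m (ix (n+1)) - m (ix (n+2)) with hq
  have hqv : ∀ i : Fin (n+2+1), pairHom (v i) q = if i.val < n+1 then 0 else if i.val = n + 1 then (3 * (g * τ) : ℤ)
      else -(3 * (g * τ) : ℤ) := by
    intro i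
    rw [hq, map_sub, hpair, hpair, hA2 (ix (n+1)) (by omega), hA2 (ix (n+2)) (by omega)]
    simp only [Fin.ext_iff, hvn1, hvn2]
    have := i.2
    split_ifs <;> first | omega | (push_cast; ring)
  set N : ℤ := |a| + 1 with hN
  set b : ℤ := a + 3 * (g * τ) * N with hb
  -- the matrix
  set U : Matrix (Fin (n+2)) (Fin (n+2)) ℤ := Matrix.of fun j =>
    if j.val < n then F j.val + H + N • q else if j.val = n then H + N • q else q with hU
  set a' : ℕ → ℤ := fun k => if k ≤ n then b - g * sE g n (k - 1) else b with ha'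
  have hHq : ∀ i : Fin (n+2+1), pairHom (v i) (H + N • q) = 
      if i.val < n then 0 else if i.val = n then (τ : ℤ) else if i.val = n+1 then b else -(τ + b) := by
    intro i
    rw [map_add, map_zsmul, hqv, smul_eq_mul]
    by_cases h1 : i.val < n
    · rw [hH1 i h1, if_pos h1, if_pos (by omega)]; ring
    · by_cases h2 : i.val = n
      · have : i = ix n := Fin.ext (by omega)
        rw [if_neg h1, if_pos h2, if_pos (by omega), this, hH2]; ring
      · by_cases h3 : i.val = n + 1
        · have : i = ix (n+1) := Fin.ext (by omega)
          rw [if_neg h1, if_neg h2, if_pos h3, if_neg (by omega), if_pos h3, this, ← ha, hb]; ring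
        · have : i = ix (n+2) := Fin.ext (by omega)
          rw [if_neg h1, if_neg h2, if_neg h3, if_neg (by omega), if_neg h3, this, hH3, hb]; ring
  have hent : ∀ (j : Fin (n+2)) (i : Fin (n+2+1)), pairHom (v i) (U j) =
      if j.val < n then (if i.val < n then (if i.val = j.val then (1:ℤ) else 0) else
        if i.val = n then (τ:ℤ) - g * sE g n j.val else if i.val = n+1 then b - g * sE g n j.val
          else - (τ + b + g * sE g n j.val))
      else if j.val = n then (if i.val < n then 0 else if i.val = n then (τ : ℤ) else if i.val = n+1 then b 
          else -(τ + b))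
      else (if i.val < n+1 then 0 else if i.val = n + 1 then (3 * (g * τ) : ℤ) else -(3 * (g * τ) : ℤ)) := by
    intro j i
    have hUj : U j = if j.val < n then F j.val + H + N • q else if j.val = n then H + N • q else q := rfl
    rw [hUj]
    by_cases h1 : j.val < n
    · rw [if_pos h1, if_pos h1, add_assoc, map_add, hF _ h1, hHq]
      split_ifs <;> ring
    · by_cases h2 : j.val = n
      · rw [if_neg h1, if_pos h2, if_neg h1, if_pos h2, hHq]
      · rw [if_neg h1, if_neg h2, if_neg h1, if_neg h2, hqv]
  have hτE : ∀ k < n, (sE g n k : ℤ) * sy g k = τ := by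
    intro k hk
    exact_mod_cast sE_mul g n k hk
  refine ⟨a', ?_, U, 1, ?_, ?_⟩
  · have hbpos : (g * τ : ℤ) + 1 ≤ b := by
      rw [hb, hN]
      have h1 : (1:ℤ) ≤ g * τ := by exact_mod_cast Nat.mul_pos hg hτ0
      have h2 := neg_abs_le a
      have h3 := abs_nonneg a
      nlinarith
    intro k hk1 hk2
    simp only [ha']
    split_ifs with hk
    · have h1 := hτE (k-1) (by omega)
      have h2 : (1:ℤ) ≤ sy g (k-1) := by exact_mod_cast sy_pos g (k-1)
      have h3 : (0:ℤ) ≤ sE g n (k-1) := by positivity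
      have h4 : (sE g n (k-1) : ℤ) ≤ τ := by nlinarith
      have h5 : (0:ℤ) ≤ g := by positivity
      nlinarith
    · have : (0:ℤ) ≤ g * τ := by positivity
      linarith
  · have hlcm : Finset.univ.lcm A = 3 * (g * τ) := by
      apply Nat.dvd_antisymm
      · apply Finset.lcm_dvd
        intro i _
        by_cases hi : i.val < n
        · rw [hA1 i hi, hτ, ← sE_mul g n _ hi]
          exact ⟨3 * (g * sE g n i.val), by ring⟩
        · rw [hA2 i (by omega)]
      · rw [← hA2 (ix n) (by omega)]
        exact Finset.dvd_lcm (Finset.mem_univ _)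
    apply unimod_of_rows h U
    · rw [GData.wt, hlcm, hA2 (Fin.last _) (by simp), Nat.div_self (by positivity)]
    · rw [Matrix.det_of_isUpperTriangular, Fin.prod_univ_castSucc, Fin.prod_univ_castSucc]
      · simp only [Matrix.of_apply, hent]
        rw [hmult]
        simp
        ring
      · intro j i hij
        have hij : i.val < j.val := hij
        rw [Matrix.of_apply, hent]
        simp only [Fin.val_castSucc]
        split_ifs <;> first | rfl | omega
    · rw [hmult]; positivity
  · intro i
    funext j
    rw [mulVec_eq_pairHom, hent]
    change _ = PgenMult g (n+2) (fun k => (a' k : ℚ)) i j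
    simp only [PgenMult, Nat.add_sub_cancel, ha']
    have e1 : n + 2 - 1 = n + 1 := rfl
    simp only [e1, tsylv_eq]
    have hgQ : (g:ℚ) ≠ 0 := by positivity
    have hgt : ((g * sP g n : ℕ) : ℚ) / g = τ := by rw [← hτ]; push_cast; field_simp
    have hi := i.2
    have hj := j.2
    by_cases hjn : j.val < n
    · have hs : ((sylv g (j.val+1) : ℕ) : ℚ) ≠ 0 := by
        have := sy_pos g j.val
        rw [sy] at this
        positivity
      have hEτ : (τ : ℚ) = sE g n j.val * sylv g (j.val+1) := by
        have := hτE j.val hjn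
        rw [sy] at this
        exact_mod_cast this.symm
      simp only [if_pos hjn, hgt, if_pos (show j.val < n + 1 by omega), if_pos (show j.val + 1 ≤ n by omega)]
      have c1 : ((sylv g (j.val+1) : ℚ) - g) / (sylv g (j.val+1) : ℚ) * τ = τ - g * sE g n j.val := by
        rw [hEτ]; field_simp
      have c2 : ((sylv g (j.val+1) : ℚ) + 2 * g) / (sylv g (j.val+1) : ℚ) * τ = τ + 2 * g * sE g n j.val := by
        rw [hEτ]; field_simp
      rw [c1, c2]
      by_cases h1 : i.val < n
      · simp only [if_pos h1, @eq_comm _ i.val]; push_cast; rfl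
      · by_cases h2 : i.val = n
        · simp only [if_neg h1, if_pos h2]; push_cast; rfl
        · by_cases h3 : i.val = n + 1
          · simp only [if_neg h1, if_neg h2, if_pos h3]
          · simp only [if_neg h1, if_neg h2, if_neg h3]; push_cast; simp; try ring
    · by_cases hjn2 : j.val = n
      · simp only [if_neg hjn, if_pos hjn2, hgt, if_pos (show j.val < n + 1 by omega), if_neg (show ¬ (j.val + 1 ≤ n) by omega),
          if_neg (show ¬ (n + 1 ≤ n) by omega)]
        by_cases h1 : i.val < n
        · simp only [if_pos h1]; rw [if_neg (by omega)]; simp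
        · by_cases h2 : i.val = n
          · simp only [if_neg h1, if_pos h2]; push_cast; rfl
          · by_cases h3 : i.val = n + 1
            · simp only [if_neg h1, if_neg h2, if_pos h3]
            · simp only [if_neg h1, if_neg h2, if_neg h3]; push_cast; rfl
      · simp only [if_neg hjn, if_neg hjn2, if_neg (show ¬ (j.val < n + 1) by omega)]
        by_cases h1 : i.val < n
        · simp only [if_pos h1, if_pos (show i.val < n + 1 by omega)]; rw [if_neg (by omega)]; simp
        · by_cases h2 : i.val = n
          · simp only [if_neg h1, if_pos h2, if_pos (show i.val < n + 1 by omega)]; simp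
          · by_cases h3 : i.val = n + 1
            · simp only [if_neg h1, if_neg h2, if_pos h3]; rw [if_neg (by omega)]; push_cast; rfl
            · simp only [if_neg h1, if_neg h2, if_neg h3]; rw [if_neg (by omega)]; push_cast; rfl

theorem iso_exc_aux {v m : Fin (3 + 1) → Fin 3 → ℤ} {A : Fin (3 + 1) → ℕ}
    (h : GData 3 3 v m A) (hA : ∀ i, A i = 12) (hmult : multOf v = 144) (y : Fin 3 → ℤ)
    (h0 : pairHom (v 0) y % 12 = 1) (h1 : pairHom (v 1) y % 12 = 1) (h2 : pairHom (v 2) y % 12 = 5)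
    (h3 : pairHom (v 3) y % 12 = 5) : IsIsomorphicToQ v (Pexc33 3) := by
  have hpair : ∀ i k : Fin 4, pairHom (v k) (m i) = (if i = k then 12 else 0) - 3 := by
    intro i k
    have := h.pair i k
    rw [pairHom_apply, this, hA]; simp
  have hbal := pairHom_bal h y
  simp only [hA, ← Finset.sum_div] at hbal
  have hbal' : ∑ i : Fin 4, pairHom (v i) y = 0 := by
    have h12 : ((12 : ℕ) : ℚ) ≠ 0 := by norm_num
    rcases div_eq_zero_iff.1 hbal with h' | h'
    · exact_mod_cast h'
    · exact absurd h' h12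
  simp only [Fin.sum_univ_four] at hbal'
  set c : Fin 4 → ℤ := fun i => pairHom (v i) y / 12 with hc
  set y' : Fin 3 → ℤ := y - ∑ i, c i • (m i - m 3) with hy'
  have hy : ∀ k, pairHom (v k) y' = pairHom (v k) y - ∑ i, c i * (pairHom (v k) (m i) - pairHom (v k) (m 3)) := by
    intro k
    rw [hy', map_sub, map_sum]
    simp only [map_zsmul, map_sub, smul_eq_mul]
  simp only [hpair, Fin.sum_univ_four] at hy
  have hlcm : Finset.univ.lcm A = 12 := by
    apply Nat.dvd_antisymm
    · apply Finset.lcm_dvd; intro i _; rw [hA]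
    · rw [← hA 0]; exact Finset.dvd_lcm (Finset.mem_univ _)
  have hy0 : pairHom (v 0) y' = 1 := by
    rw [hy]; simp [hc]; omega
  have hy1 : pairHom (v 1) y' = 1 := by
    rw [hy]; simp [hc]; omega
  have hy2 : pairHom (v 2) y' = 5 := by
    rw [hy]; simp [hc]; omega
  have hy3 : pairHom (v 3) y' = -7 := by
    rw [hy]; simp [hc]; omega
  set U : Matrix (Fin 3) (Fin 3) ℤ := Matrix.of ![y', m 1 - m 3, m 2 - m 3] with hU
  have e0 : U 0 = y' := rfl
  have e1 : U 1 = m 1 - m 3 := rfl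
  have e2 : U 2 = m 2 - m 3 := rfl
  refine ⟨U, 1, ?_, ?_⟩
  · apply unimod_of_rows h
    · rw [GData.wt, hlcm, hA]
    · rw [Matrix.det_fin_three, hmult]
      simp only [Matrix.of_apply, e0, e1, e2]
      change pairHom (v 0) _ * pairHom (v 1) _ * pairHom (v 2) _ - pairHom (v 0) _ * pairHom (v 2) _ * pairHom (v 1) _
        - pairHom (v 1) _ * pairHom (v 0) _ * pairHom (v 2) _ + pairHom (v 1) _ * pairHom (v 2) _ * pairHom (v 0) _
        + pairHom (v 2) _ * pairHom (v 0) _ * pairHom (v 1) _ - pairHom (v 2) _ * pairHom (v 1) _ * pairHom (v 0) _ = _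
      simp only [map_sub, hpair, hy0, hy1, hy2]
      simp
    · rw [hmult]; norm_num
  · intro i
    funext j
    rw [mulVec_eq_pairHom]
    change _ = Pexc33 3 i j
    fin_cases j
    · change ((pairHom (v i) (U 0) : ℤ) : ℚ) = Pexc33 3 i 0
      rw [e0]
      fin_cases i
      · change ((pairHom (v 0) y' : ℤ) : ℚ) = _
        rw [hy0]; simp [Pexc33]
      · change ((pairHom (v 1) y' : ℤ) : ℚ) = _
        rw [hy1]; simp [Pexc33]
      · change ((pairHom (v 2) y' : ℤ) : ℚ) = _
        rw [hy2]; simp [Pexc33]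
      · change ((pairHom (v 3) y' : ℤ) : ℚ) = _
        rw [hy3]; simp [Pexc33]
    · change ((pairHom (v i) (U 1) : ℤ) : ℚ) = Pexc33 3 i 1
      rw [e1, map_sub, hpair, hpair]
      fin_cases i <;> simp [Pexc33]
    · change ((pairHom (v i) (U 2) : ℤ) : ℚ) = Pexc33 3 i 2
      rw [e2, map_sub, hpair, hpair]
      fin_cases i <;> simp [Pexc33]

theorem iso_exc {v m : Fin (3 + 1) → Fin 3 → ℤ} {A : Fin (3 + 1) → ℕ}
    (h : GData 3 3 v m A) (hA : ∀ i, A i = 12) (hmult : multOf v = 144) :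
    IsIsomorphicToQ v (Pexc33 3) := by
  have hlcm : Finset.univ.lcm A = 12 := by
    apply Nat.dvd_antisymm
    · apply Finset.lcm_dvd; intro i _; rw [hA]
    · rw [← hA 0]; exact Finset.dvd_lcm (Finset.mem_univ _)
  have hpair : ∀ i k : Fin 4, pairHom (v k) (m i) = (if i = k then 12 else 0) - 3 := by
    intro i k
    have := h.pair i k
    rw [pairHom_apply, this, hA]; simp
  have hmm : multOf m = 3 := by
    have := h.mult_mul
    rw [hmult, hlcm] at this
    simp only [hA] at this
    simp at this
    omega
  have hL : ∀ j, AddSubgroup.closure (Set.range m) = (AddSubgroup.zmultiples ((3:ℕ) : ℤ)).comap (pairHom (v j)) := by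
    intro j
    have hle := h.closure_le_comap j 3 (by rw [hA]; norm_num) dvd_rfl
    apply le_antisymm hle
    have h1 := AddSubgroup.relIndex_mul_index hle
    rw [h.index_comap] at h1
    have h2 : (AddSubgroup.closure (Set.range m)).index = 3 := hmm
    rw [h2] at h1
    rw [← AddSubgroup.relIndex_eq_one]
    omega
  obtain ⟨y, hy⟩ := prim_bezout (h.prim 0)
  replace hy : pairHom (v 0) y = 1 := hy
  have hmem : ∀ j x, x ∈ AddSubgroup.closure (Set.range m) ↔ (3:ℤ) ∣ pairHom (v j) x := by
    intro j x
    rw [hL j, AddSubgroup.mem_comap, Int.mem_zmultiples_iff]; rfl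
  have hn3 : ∀ j, ¬ (3:ℤ) ∣ pairHom (v j) y := by
    intro j
    rw [← hmem, hmem 0, hy]; norm_num
  have hcong : ∀ j x, x ∈ AddSubgroup.closure (Set.range m) → (12:ℤ) ∣ pairHom (v j) x - pairHom (v 0) x := by
    intro j x hx
    have : AddSubgroup.closure (Set.range m) ≤ (AddSubgroup.zmultiples (12 : ℤ)).comap (pairHom (v j) - pairHom (v 0)) := by
      rw [AddSubgroup.closure_le]
      rintro _ ⟨i, rfl⟩
      rw [SetLike.mem_coe, AddSubgroup.mem_comap, Int.mem_zmultiples_iff, AddMonoidHom.sub_apply, hpair, hpair]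
      split_ifs <;> norm_num
    have := this hx
    rwa [AddSubgroup.mem_comap, Int.mem_zmultiples_iff, AddMonoidHom.sub_apply] at this
  have h4 : ∀ j, (12:ℤ) ∣ 3 * pairHom (v j) y - 3 := by
    intro j
    have h1 : (3:ℤ) • y ∈ AddSubgroup.closure (Set.range m) := by
      rw [hmem 0, map_zsmul, hy]; norm_num
    have := hcong j _ h1
    rw [map_zsmul, map_zsmul, hy] at this
    simpa using this
  have hres : ∀ j, pairHom (v j) y % 12 = 1 ∨ pairHom (v j) y % 12 = 5 := by
    intro j
    have h1 := hn3 j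
    have h2 := h4 j
    omega
  have hbal := pairHom_bal h y
  simp only [hA, ← Finset.sum_div] at hbal
  have hbal' : ∑ i : Fin 4, pairHom (v i) y = 0 := by
    have h12 : ((12 : ℕ) : ℚ) ≠ 0 := by norm_num
    rcases div_eq_zero_iff.1 hbal with h' | h'
    · exact_mod_cast h'
    · exact absurd h' h12
  simp only [Fin.sum_univ_four] at hbal'
  have h1 := hres 1
  have h2 := hres 2
  have h3 := hres 3
  have hcase : (pairHom (v 1) y % 12 = 1 ∧ pairHom (v 2) y % 12 = 5 ∧ pairHom (v 3) y % 12 = 5) ∨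
     (pairHom (v 1) y % 12 = 5 ∧ pairHom (v 2) y % 12 = 1 ∧ pairHom (v 3) y % 12 = 5) ∨
     (pairHom (v 1) y % 12 = 5 ∧ pairHom (v 2) y % 12 = 5 ∧ pairHom (v 3) y % 12 = 1) := by omega
  have h0 : pairHom (v 0) y % 12 = 1 := by rw [hy]; norm_num
  rcases hcase with ⟨c1, c2, c3⟩ | ⟨c1, c2, c3⟩ | ⟨c1, c2, c3⟩
  · exact iso_exc_aux h hA hmult y h0 c1 c2 c3
  · apply iso_perm (σ := Equiv.swap 1 2)
    exact iso_exc_aux (h.perm (Equiv.swap 1 2)) (fun i => hA _) (by rw [multOf_perm, hmult]) y h0 c2 c1 c3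
  · apply iso_perm (σ := Equiv.swap 1 3)
    exact iso_exc_aux (h.perm (Equiv.swap 1 3)) (fun i => hA _) (by rw [multOf_perm, hmult]) y h0 c3 c2 c1

namespace GData
variable {d g : ℕ} {v m : Fin (d + 1) → Fin d → ℤ} {A : Fin (d + 1) → ℕ}

theorem pairQ (h : GData d g v m A) (i k) : 
    ∑ j, (m i j : ℚ) * v k j = (if i = k then (A i : ℚ) else 0) - g := by
  have := h.pair i k
  have h2 : ((∑ j, m i j * v k j : ℤ) : ℚ) = (((if i = k then (A i : ℤ) else 0) - g : ℤ) : ℚ) := by rw [this]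
  push_cast at h2
  exact h2

theorem fano (h : GData d g v m A) : IsFanoSimplex v := by
  have hp : ∀ i, (0:ℚ) < A i := fun i => by exact_mod_cast h.pos i
  have hg : (0:ℚ) < g := by exact_mod_cast h.gpos
  refine ⟨?_, h.prim, fun i => g / A i, fun i => div_pos hg (hp i), ?_, ?_⟩
  · rw [affineIndependent_iff]
    intro s c hs hc k hk
    have h1 : ∑ i ∈ s, c i * ((if k = i then (A k : ℚ) else 0) - g) = 0 := by
      simp only [← h.pairQ, Finset.mul_sum]
      rw [Finset.sum_comm]
      apply Finset.sum_eq_zero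
      intro j _
      have := congrFun hc j
      simp only [Finset.sum_apply, Pi.smul_apply, smul_eq_mul, toQ, Pi.zero_apply] at this
      have e : ∑ i ∈ s, c i * ((m k j : ℚ) * v i j) = m k j * ∑ i ∈ s, c i * v i j := by
        rw [Finset.mul_sum]; exact Finset.sum_congr rfl fun _ _ => by ring
      rw [e, this, mul_zero]
    simp only [mul_sub, Finset.sum_sub_distrib, ← Finset.sum_mul, hs, zero_mul, sub_zero, mul_ite, mul_zero,
      Finset.sum_ite_eq, if_pos hk] at h1
    rcases mul_eq_zero.1 h1 with h2 | h2
    · exact h2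
    · exact absurd h2 (hp k).ne'
  · have : ∀ i, (g:ℚ) / A i = g * (1 / A i) := fun i => by ring
    simp only [this, ← Finset.mul_sum, h.sum]
    field_simp
  · intro j
    have : ∀ i, (g:ℚ) / A i * toQ (v i) j = g * ((v i j : ℚ) / A i) := fun i => by rw [toQ]; ring
    simp only [this, ← Finset.mul_sum, h.bal, mul_zero]

theorem ext_pairQ (h : GData d g v m A) (j : Fin (d + 1)) (x y : Fin d → ℚ)
    (hxy : ∀ k, ∑ l, x l * v (j.succAbove k) l = ∑ l, y l * v (j.succAbove k) l) : x = y := by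
  have hd : ((Matrix.of fun i => v (j.succAbove i)).map (Int.cast : ℤ → ℚ)).det ≠ 0 := by
    rw [← Int.cast_det]
    exact Int.cast_ne_zero.2 (h.det_ne j).2
  have : ((Matrix.of fun i => v (j.succAbove i)).map (Int.cast : ℤ → ℚ)).mulVec (x - y) = 0 := by
    funext k
    simp only [Matrix.mulVec, dotProduct, Matrix.map_apply, Matrix.of_apply, Pi.sub_apply, Pi.zero_apply, mul_sub]
    rw [Finset.sum_sub_distrib]
    have := hxy k
    simp only [mul_comm ((v _ _ : ℤ) : ℚ)]
    linarith
  exact sub_eq_zero.1 (Matrix.eq_zero_of_mulVec_eq_zero hd this)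

theorem lattice (h : GData d g v m A) :
    IsLatticeSet ((g : ℚ) • dualBody (simplexHull fun i => toQ (v i))) := by
  have hp : ∀ i, (0:ℚ) < A i := fun i => by exact_mod_cast h.pos i
  have hg : (0:ℚ) < g := by exact_mod_cast h.gpos
  have hconv : Convex ℚ ((g : ℚ) • dualBody (simplexHull fun i => toQ (v i))) := by
    apply Convex.smul
    intro x hx y hy a b ha hb hab
    rw [mem_dualBody_iff] at hx hy ⊢
    intro i
    have e : ∑ j, (a • x + b • y) j * toQ (v i) j = a * ∑ j, x j * toQ (v i) j + b * ∑ j, y j * toQ (v i) j := by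
      rw [Finset.mul_sum, Finset.mul_sum, ← Finset.sum_add_distrib]
      exact Finset.sum_congr rfl fun _ _ => by simp; ring
    rw [e]
    have h1 := hx i
    have h2 := hy i
    nlinarith
  have hmS : ∀ i, toQ (m i) ∈ (g : ℚ) • dualBody (simplexHull fun i => toQ (v i)) := by
    intro i
    refine ⟨(g:ℚ)⁻¹ • toQ (m i), ?_, ?_⟩
    · rw [mem_dualBody_iff]
      intro k
      have e : ∑ j, ((g:ℚ)⁻¹ • toQ (m i)) j * toQ (v k) j = (g:ℚ)⁻¹ * ∑ j, (m i j : ℚ) * v k j := by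
        rw [Finset.mul_sum]
        exact Finset.sum_congr rfl fun _ _ => by simp [toQ]; ring
      rw [e, h.pairQ]
      have h1 : (g:ℚ)⁻¹ * ((if i = k then (A i : ℚ) else 0) - g) = (g:ℚ)⁻¹ * (if i = k then (A i : ℚ) else 0) - 1 := by
        field_simp
      have h2 : (0:ℚ) ≤ (g:ℚ)⁻¹ * (if i = k then (A i : ℚ) else 0) := by
        split_ifs <;> positivity
      rw [h1]; linarith
    · change (g:ℚ) • ((g:ℚ)⁻¹ • toQ (m i)) = _
      rw [smul_smul, mul_inv_cancel₀ hg.ne', one_smul]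
  apply Set.Subset.antisymm
  · rintro x ⟨y, hy, rfl⟩
    rw [mem_dualBody_iff] at hy
    set lam : Fin (d + 1) → ℚ := fun i => g / A i * (1 + ∑ j, y j * toQ (v i) j) with hlam
    have hlp : ∀ i, 0 ≤ lam i := by
      intro i
      have := hy i
      exact mul_nonneg (div_pos hg (hp i)).le (by linarith)
    have hls : ∑ i, lam i = 1 := by
      have : ∀ i, lam i = g * (1 / A i) + ∑ j, g * y j * ((v i j : ℚ) / A i) := by
        intro i
        rw [hlam]
        simp only [mul_add, Finset.mul_sum]
        congr 1
        · ring
        · exact Finset.sum_congr rfl fun _ _ => by rw [toQ]; ring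
      simp only [this, Finset.sum_add_distrib, ← Finset.mul_sum, h.sum]
      rw [Finset.sum_comm]
      simp only [← Finset.mul_sum, h.bal, mul_zero, Finset.sum_const_zero]
      field_simp
      simp
    have hcomb : (g:ℚ) • y = ∑ i, lam i • toQ (m i) := by
      apply h.ext_pairQ 0
      intro k
      generalize Fin.succAbove 0 k = k
      have e1 : ∑ l, (∑ i, lam i • toQ (m i)) l * (v k l : ℚ) = ∑ i, lam i * ∑ l, (m i l : ℚ) * v k l := by
        simp only [Finset.sum_apply, Pi.smul_apply, smul_eq_mul, Finset.sum_mul, Finset.mul_sum, toQ]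
        rw [Finset.sum_comm]
        exact Finset.sum_congr rfl fun _ _ => Finset.sum_congr rfl fun _ _ => by ring
      rw [e1]
      simp only [h.pairQ, mul_sub, Finset.sum_sub_distrib, ← Finset.sum_mul, hls, mul_ite, mul_zero,
        Finset.sum_ite_eq', Finset.mem_univ, if_true]
      have e2 : ∑ l, ((g:ℚ) • y) l * (v k l : ℚ) = g * ∑ l, y l * toQ (v k) l := by
        rw [Finset.mul_sum]
        exact Finset.sum_congr rfl fun _ _ => by simp [toQ]; ring
      rw [e2, hlam]
      have := (hp k).ne'
      field_simp
      ring
    change (g:ℚ) • y ∈ _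
    rw [hcomb]
    apply (convex_convexHull ℚ _).sum_mem (fun i _ => hlp i) hls
    intro i _
    apply subset_convexHull
    exact ⟨hmS i, fun j => ⟨m i j, rfl⟩⟩
  · exact convexHull_min (fun x hx => hx.1) hconv

theorem vertex_integral (h : GData d g v m A) (c : ℕ) (hc : 0 < c)
    (hL : IsLatticeSet ((c : ℚ) • dualBody (simplexHull fun i => toQ (v i)))) (j : Fin (d + 1)) (k : Fin d) :
    ∃ z : ℤ, (c : ℚ) * m j k / g = z := by
  have hp : ∀ i, (0:ℚ) < A i := fun i => by exact_mod_cast h.pos i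
  have hg : (0:ℚ) < g := by exact_mod_cast h.gpos
  have hcQ : (0:ℚ) < c := by exact_mod_cast hc
  have e : ∀ i, ∑ l, ((m j l : ℚ) / g) * toQ (v i) l = ((if j = i then (A j : ℚ) else 0) - g) / g := by
    intro i
    rw [← h.pairQ, Finset.sum_div]
    exact Finset.sum_congr rfl fun _ _ => by rw [toQ]; ring
  have hne : ∀ i, j ≠ j.succAbove i := fun i => (Fin.succAbove_ne j i).symm
  have e1 : ∀ i, ∑ l, ((m j l : ℚ) / g) * toQ (v (j.succAbove i)) l = -1 := by
    intro i
    rw [e, if_neg (hne i)]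
    field_simp
    simp
  obtain ⟨z, hz⟩ := lattice_vertex (fun i => toQ (v i)) c hL hcQ j (fun l => (m j l : ℚ) / g)
    e1 (by
      rw [e, if_pos rfl, sub_div, div_self hg.ne']
      have := div_pos (hp j) hg
      linarith) (by
      intro x hx
      apply h.ext_pairQ j
      intro i
      have h1 := hx i
      simp only [toQ] at h1
      rw [h1]
      have h2 : ∑ l, ((c:ℚ) • fun l => (m j l : ℚ) / g) l * (v (j.succAbove i) l : ℚ)
         = c * ∑ l, ((m j l : ℚ) / g) * toQ (v (j.succAbove i)) l := by
        rw [Finset.mul_sum]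
        exact Finset.sum_congr rfl fun _ _ => by simp [toQ]; ring
      rw [h2, e1]; ring) k
  exact ⟨z, by rw [← hz]; ring⟩

theorem gor (h : GData d g v m A) (j : Fin (d + 1)) (k : Fin d) (hjk : m j k = 1) :
    gorensteinIndex (fun i => toQ (v i)) = g := by
  have hg : (0:ℚ) < g := by exact_mod_cast h.gpos
  apply le_antisymm
  · exact Nat.sInf_le ⟨h.gpos, h.lattice⟩
  · have hne : {c : ℕ | 0 < c ∧ IsLatticeSet ((c:ℚ) • dualBody (simplexHull fun i => toQ (v i)))}.Nonempty :=
      ⟨g, h.gpos, h.lattice⟩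
    refine le_csInf hne ?_
    rintro c ⟨hc, hL⟩
    obtain ⟨z, hz⟩ := h.vertex_integral c hc hL j k
    rw [hjk, Int.cast_one, mul_one, div_eq_iff hg.ne'] at hz
    have h1 : (c : ℤ) = z * g := by exact_mod_cast hz
    have h2 : (g : ℤ) ∣ c := ⟨z, by rw [h1]; ring⟩
    exact Nat.le_of_dvd hc (by exact_mod_cast h2)

end GData

/-- vertices of the special simplex -/
def wS (g n : ℕ) (i : Fin (n + 2 + 1)) (j : Fin (n + 2)) : ℤ :=
  if i.val < n then (if j.val = i.val then 1 else 0)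
  else if i.val ≤ n + 1 then
    (if j.val < n then (sP g n : ℤ) - g * sE g n j.val
      else if j.val = n then (sP g n : ℤ)
      else if i.val = n then 0 else 3 * (g * sP g n))
  else (if j.val < n then -2 * (sP g n : ℤ) - g * sE g n j.val
      else if j.val = n then -2 * (sP g n : ℤ) else -(3 * (g * sP g n)))

/-- dual vertices of the special simplex -/
def mS (g n : ℕ) (i : Fin (n + 2 + 1)) (j : Fin (n + 2)) : ℤ :=
  if j.val < n then -g + (if j.val = i.val then (sy g j.val : ℤ) else 0)
  else if j.val = n then (if i.val < n then g * n - sy g i.val else if i.val = n then g * (n + 2) else g * (n - 1))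
  else (if i.val = n then -1 else if i.val = n + 1 then 1 else 0)

def AS (g n : ℕ) (i : Fin (n + 2 + 1)) : ℕ := if i.val < n then sy g i.val else 3 * (g * sP g n)

theorem sE_sumZ (g n : ℕ) : (g : ℤ) * ∑ k : Fin n, (sE g n k.val : ℤ) = sP g n - 1 := by
  have := sE_sum g n
  rw [Finset.sum_range] at this
  rw [← this]; push_cast; ring

theorem sum_helper (g n i : ℕ) (α β : ℤ) :
    ∑ j : Fin n, (-(g:ℤ) + (if j.val = i then (sy g j.val : ℤ) else 0)) * (α * sP g n + β * (g * sE g n j.val))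
     = -g * (α * n * sP g n + β * (sP g n - 1)) + if i < n then α * sy g i * sP g n + β * g * sP g n else 0 := by
  have e : ∀ j : Fin n, (-(g:ℤ) + (if j.val = i then (sy g j.val : ℤ) else 0)) * (α * sP g n + β * (g * sE g n j.val))
     = -g * α * sP g n + -(g * β) * (g * (sE g n j.val : ℤ)) + (if j.val = i then α * sy g i * sP g n + β * g * sP g n else 0) := by
    intro j
    by_cases h : j.val = i
    · subst h
      rw [if_pos rfl, if_pos rfl]
      have : (sE g n j.val : ℤ) * sy g j.val = sP g n := by exact_mod_cast sE_mul g n _ j.2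
      linear_combination (β * g) * this
    · rw [if_neg h, if_neg h]; ring
  simp only [e, Finset.sum_add_distrib, ← Finset.mul_sum, sE_sumZ]
  have e2 : ∑ j : Fin n, (if j.val = i then α * sy g i * sP g n + β * g * sP g n else 0) =
      if i < n then α * sy g i * sP g n + β * g * sP g n else 0 := by
    by_cases h : i < n
    · rw [if_pos h, Finset.sum_eq_single (⟨i, h⟩ : Fin n)]
      · simp
      · intro b _ hb
        rw [if_neg]
        intro hh; exact hb (Fin.ext hh)
      · simp
    · rw [if_neg h]
      apply Finset.sum_eq_zero
      intro j _
      rw [if_neg]; have := j.2; omega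
  rw [e2]
  simp
  ring

theorem pairS (g n : ℕ) (i k : Fin (n + 2 + 1)) :
    ∑ j, mS g n i j * wS g n k j = (if i = k then (AS g n i : ℤ) else 0) - g := by
  have hi := i.2
  have hk := k.2
  by_cases hkn : k.val < n
  · have e : ∀ j : Fin (n+2), mS g n i j * wS g n k j = if j = ⟨k.val, by omega⟩ then mS g n i j else 0 := by
      intro j
      rw [wS, if_pos hkn]
      simp only [Fin.ext_iff]
      split_ifs <;> simp
    simp only [e]
    rw [Finset.sum_ite_eq', if_pos (Finset.mem_univ _), mS]
    simp only [if_pos hkn, AS, Fin.ext_iff]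
    by_cases h : k.val = i.val
    · rw [if_pos h, if_pos h.symm, if_pos (by omega), h]; ring
    · rw [if_neg h, if_neg (fun h' => h h'.symm)]; ring
  · rw [Fin.sum_univ_castSucc, Fin.sum_univ_castSucc]
    by_cases hk2 : k.val ≤ n + 1
    · have e : ∀ j : Fin n, mS g n i j.castSucc.castSucc * wS g n k j.castSucc.castSucc
        = (-(g:ℤ) + (if j.val = i.val then (sy g j.val : ℤ) else 0)) * (1 * sP g n + (-1) * (g * sE g n j.val)) := by
        intro j
        simp only [mS, wS, Fin.val_castSucc, if_pos j.2, if_neg hkn, if_pos hk2]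
        ring
      simp only [e]
      rw [sum_helper]
      simp only [mS, wS, AS, Fin.val_castSucc, Fin.val_last, if_neg hkn, if_pos hk2, lt_irrefl, if_true, if_false,
        Fin.ext_iff, Nat.not_succ_lt_self, Nat.succ_ne_self]
      by_cases h1 : i.val < n
      · simp only [if_pos h1]
        rw [if_neg (show ¬ i.val = n by omega), if_neg (show ¬ i.val = n + 1 by omega), if_neg (show ¬ i.val = k.val by omega)]
        ring
      · by_cases h2 : i.val = n
        · simp only [if_neg h1, if_pos h2]
          by_cases h3 : k.val = n
          · rw [if_pos h3, if_pos (by omega)]; push_cast; ring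
          · rw [if_neg h3, if_neg (by omega)]; push_cast; ring
        · simp only [if_neg h1, if_neg h2]
          by_cases h4 : i.val = n + 1
          · by_cases h3 : k.val = n
            · rw [if_pos h3, if_neg (show ¬ i.val = k.val by omega)]; push_cast; ring
            · rw [if_neg h3, if_pos h4, if_pos (show i.val = k.val by omega)]; push_cast; ring
          · rw [if_neg h4, if_neg (show ¬ i.val = k.val by omega)]; push_cast; ring
    · have e : ∀ j : Fin n, mS g n i j.castSucc.castSucc * wS g n k j.castSucc.castSucc
        = (-(g:ℤ) + (if j.val = i.val then (sy g j.val : ℤ) else 0)) * ((-2) * sP g n + (-1) * (g * sE g n j.val)) := by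
        intro j
        simp only [mS, wS, Fin.val_castSucc, if_pos j.2, if_neg hkn, if_neg hk2]
        ring
      simp only [e]
      rw [sum_helper]
      simp only [mS, wS, AS, Fin.val_castSucc, Fin.val_last, if_neg hkn, if_neg hk2, lt_irrefl, if_true, if_false,
        Fin.ext_iff, Nat.not_succ_lt_self, Nat.succ_ne_self]
      by_cases h1 : i.val < n
      · simp only [if_pos h1]
        rw [if_neg (show ¬ i.val = n by omega), if_neg (show ¬ i.val = n + 1 by omega), if_neg (show ¬ i.val = k.val by omega)]
        ring
      · by_cases h2 : i.val = n
        · simp only [if_neg h1, if_pos h2]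
          rw [if_neg (by omega)]; push_cast; ring
        · simp only [if_neg h1, if_neg h2]
          by_cases h4 : i.val = n + 1
          · rw [if_pos h4, if_neg (by omega)]; push_cast; ring
          · rw [if_neg h4, if_pos (by omega)]; push_cast; ring

theorem isPrimitive_of {d : ℕ} (x : Fin d → ℤ) (h : ∀ p : ℕ, p.Prime → ¬ ∀ j, (p : ℤ) ∣ x j) : IsPrimitive x := by
  rw [IsPrimitive]
  have hn : 0 ≤ Finset.univ.gcd x := by
    have : normalize (Finset.univ.gcd x) = Finset.univ.gcd x := Finset.normalize_gcd
    rw [← this, ← Int.abs_eq_normalize]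
    exact abs_nonneg _
  by_contra hne
  have : (Finset.univ.gcd x).natAbs ≠ 1 := by omega
  obtain ⟨p, hp, hpd⟩ := Nat.exists_prime_and_dvd this
  apply h p hp
  intro j
  exact (Int.natCast_dvd.2 hpd).trans (Finset.gcd_dvd (Finset.mem_univ j))

theorem prime_contra (g n p : ℕ) (hp : p.Prime) (h1 : p ∣ sP g n) (h2 : ∀ k < n, p ∣ g * sE g n k) : False := by
  rw [sP, hp.prime.dvd_finsetProd_iff] at h1
  obtain ⟨k, hk, hpk⟩ := h1
  have hk := Finset.mem_range.1 hk
  have h3 := hpk.trans (dvd_sE_add_one g n k hk)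
  have h4 := (Nat.dvd_add_right (h2 k hk)).1 h3
  exact hp.one_lt.ne' (Nat.dvd_one.1 h4)

theorem primS (g n : ℕ) (hg : Odd g) (i : Fin (n + 2 + 1)) : IsPrimitive (wS g n i) := by
  have hi := i.2
  apply isPrimitive_of
  intro p hp hall
  by_cases h1 : i.val < n
  · have := hall ⟨i.val, by omega⟩
    rw [wS, if_pos h1, if_pos rfl] at this
    have h2 : p ∣ 1 := by exact_mod_cast this
    exact hp.one_lt.ne' (Nat.dvd_one.1 h2)
  · by_cases h2 : i.val ≤ n + 1
    · have hτ := hall ⟨n, by omega⟩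
      simp only [wS, if_neg h1, if_pos h2, lt_irrefl, if_true, if_false] at hτ
      apply prime_contra g n p hp (by exact_mod_cast hτ)
      intro k hk
      have h3 := hall ⟨k, by omega⟩
      simp only [wS, if_neg h1, if_pos h2, if_pos hk] at h3
      have h4 := (dvd_sub_right hτ).1 h3
      exact_mod_cast h4
    · have hτ := hall ⟨n, by omega⟩
      have hτ2 := hall ⟨n + 1, by omega⟩
      simp only [wS, if_neg h1, if_neg h2, lt_irrefl, if_true, if_false, Nat.not_succ_lt_self, Nat.succ_ne_self] at hτ hτ2
      rw [dvd_neg] at hτ2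
      have hτ2' : p ∣ 3 * (g * sP g n) := by exact_mod_cast hτ2
      have hτ' : p ∣ 2 * sP g n := by
        rw [neg_mul, dvd_neg] at hτ; exact_mod_cast hτ
      have h5 : p ∣ sP g n := by
        rcases hp.dvd_mul.1 hτ' with h | h
        · have hp2 : p = 2 := (Nat.prime_dvd_prime_iff_eq hp Nat.prime_two).1 h
          subst hp2
          rcases hp.dvd_mul.1 hτ2' with h | h
          · omega
          · rcases hp.dvd_mul.1 h with h | h
            · rcases hg with ⟨r, hr⟩; omega
            · exact h
        · exact h
      apply prime_contra g n p hp h5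
      intro k hk
      have h3 := hall ⟨k, by omega⟩
      simp only [wS, if_neg h1, if_neg h2, if_pos hk] at h3
      have h4 := (dvd_sub_right hτ).1 h3
      exact_mod_cast h4

theorem AS_inv (g n : ℕ) (k : Fin n) :
    1 / (AS g n k.castSucc.castSucc.castSucc : ℚ) = sE g n k.val / sP g n := by
  have h1 : (sE g n k.val : ℚ) * sy g k.val = sP g n := by exact_mod_cast sE_mul g n _ k.2
  have h2 : (sy g k.val : ℚ) ≠ 0 := by exact_mod_cast (sy_pos g _).ne'
  have h3 : (sP g n : ℚ) ≠ 0 := by exact_mod_cast (sP_pos g _).ne'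
  simp only [AS, Fin.val_castSucc, if_pos k.2]
  field_simp
  linarith

theorem gdataS (g n : ℕ) (hg : Odd g) : GData (n + 2) g (wS g n) (mS g n) (AS g n) := by
  have hg0 : 0 < g := hg.pos
  have hgQ : (g:ℚ) ≠ 0 := by positivity
  have h3 : (sP g n : ℚ) ≠ 0 := by exact_mod_cast (sP_pos g _).ne'
  refine ⟨hg0, ?_, pairS g n, ?_, ?_, primS g n hg⟩
  · intro i
    have := sP_pos g n
    have := sy_pos g i.val
    rw [AS]; split_ifs <;> positivity
  · rw [Fin.sum_univ_castSucc, Fin.sum_univ_castSucc, Fin.sum_univ_castSucc]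
    simp only [AS_inv, ← Finset.sum_div]
    have hs : (g : ℚ) * ∑ k : Fin n, (sE g n k.val : ℚ) = sP g n - 1 := by exact_mod_cast sE_sumZ g n
    simp only [AS, Fin.val_castSucc, Fin.val_last, lt_irrefl, if_false, Nat.not_succ_lt_self,
      if_neg (show ¬ (n + 2 < n) by omega), if_neg (show ¬ (n + 1 < n) by omega)]
    push_cast
    field_simp
    linear_combination 3 * hs
  · intro j
    rw [Fin.sum_univ_castSucc, Fin.sum_univ_castSucc, Fin.sum_univ_castSucc]
    have hj := j.2
    have e : ∑ i : Fin n, (wS g n i.castSucc.castSucc.castSucc j : ℚ) / AS g n i.castSucc.castSucc.castSucc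
        = if j.val < n then (sE g n j.val : ℚ) / sP g n else 0 := by
      have e' : ∀ i : Fin n, (wS g n i.castSucc.castSucc.castSucc j : ℚ) / AS g n i.castSucc.castSucc.castSucc
         = if j.val = i.val then (sE g n j.val : ℚ) / sP g n else 0 := by
        intro i
        rw [div_eq_mul_one_div, AS_inv]
        simp only [wS, Fin.val_castSucc, if_pos i.2]
        by_cases h : j.val = i.val
        · rw [if_pos h, if_pos h, h]; simp
        · rw [if_neg h, if_neg h]; simp
      simp only [e']
      by_cases h : j.val < n
      · rw [if_pos h, Finset.sum_eq_single (⟨j.val, h⟩ : Fin n)]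
        · simp
        · intro b _ hb
          rw [if_neg]
          intro hh; exact hb (Fin.ext hh.symm)
        · simp
      · rw [if_neg h]
        apply Finset.sum_eq_zero
        intro i _
        rw [if_neg]; have := i.2; omega
    rw [e]
    simp only [wS, AS, Fin.val_castSucc, Fin.val_last, lt_irrefl, if_false, le_refl, if_true,
      if_neg (show ¬ (n + 2 < n) by omega), if_neg (show ¬ (n + 1 < n) by omega), if_pos (show n ≤ n + 1 by omega),
      if_neg (show ¬ (n + 2 ≤ n + 1) by omega), if_neg (show ¬ (n + 1 = n) by omega)]
    by_cases h1 : j.val < n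
    · simp only [if_pos h1]
      push_cast
      field_simp
      ring
    · by_cases h2 : j.val = n
      · simp only [if_neg h1, if_pos h2]
        push_cast
        field_simp
        ring
      · simp only [if_neg h1, if_neg h2]
        push_cast
        ring

theorem multS (g n : ℕ) (hg : Odd g) : multOf (wS g n) = 3 * g * sP g n * sP g n := by
  have h := gdataS g n hg
  have hg0 : 0 < g := hg.pos
  have hτ0 := sP_pos g n
  have hA : ∀ i : Fin (n+2+1), n ≤ i.val → AS g n i = 3 * (g * sP g n) := fun i hi => by
    rw [AS, if_neg (by omega)]
  have hlcm : Finset.univ.lcm (AS g n) = 3 * (g * sP g n) := by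
    apply Nat.dvd_antisymm
    · apply Finset.lcm_dvd
      intro i _
      by_cases hi : i.val < n
      · rw [AS, if_pos hi, ← sE_mul g n _ hi]
        exact ⟨3 * (g * sE g n i.val), by ring⟩
      · rw [hA i (by omega)]
    · rw [← hA (Fin.last _) (by simp)]
      exact Finset.dvd_lcm (Finset.mem_univ _)
  have hw : GData.wt (AS g n) (Fin.last (n+2)) = 1 := by
    rw [GData.wt, hlcm, hA (Fin.last _) (by simp), Nat.div_self (by positivity)]
  have h1 := h.det_v (Fin.last (n+2))
  rw [hw, one_mul] at h1
  rw [← h1, ← Matrix.det_transpose, Matrix.det_of_isUpperTriangular, Fin.prod_univ_castSucc, Fin.prod_univ_castSucc]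
  · have e : ∀ j : Fin n, (Matrix.of fun i => wS g n ((Fin.last (n+2)).succAbove i)).transpose
        j.castSucc.castSucc j.castSucc.castSucc = 1 := by
      intro j
      simp [wS]
    simp only [e]
    simp [wS, Int.natAbs_mul]
    ring
  · intro j i hij
    have hij : i.val < j.val := hij
    have hj := j.2
    simp only [Matrix.transpose_apply, Matrix.of_apply, Fin.succAbove_last, wS, Fin.val_castSucc]
    split_ifs <;> first | rfl | omega

theorem entS (g n : ℕ) (hg : 0 < g) (i : Fin (n + 2 + 1)) (j : Fin (n + 2)) :
    (wS g n i j : ℚ) = PgenMult g (n + 2) (aSpec g (n + 2)) i j := by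
  simp only [PgenMult, aSpec, Nat.add_sub_cancel]
  have e1 : n + 2 - 1 = n + 1 := rfl
  simp only [e1, tsylv_eq]
  have hgQ : (g:ℚ) ≠ 0 := by positivity
  have hgt : ((g * sP g n : ℕ) : ℚ) / g = sP g n := by push_cast; field_simp
  have hi := i.2
  have hj := j.2
  by_cases hjn : j.val < n
  · have hs : ((sylv g (j.val+1) : ℕ) : ℚ) ≠ 0 := by
      have := sy_pos g j.val
      rw [sy] at this
      positivity
    have hEτ : (sP g n : ℚ) = sE g n j.val * sylv g (j.val+1) := by
      have := sE_mul g n j.val hjn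
      rw [sy] at this
      exact_mod_cast this.symm
    simp only [if_pos hjn, hgt, if_pos (show j.val < n + 1 by omega), if_pos (show j.val + 1 ≤ n by omega), wS]
    have c1 : ((sylv g (j.val+1) : ℚ) - g) / (sylv g (j.val+1) : ℚ) * sP g n = sP g n - g * sE g n j.val := by
      rw [hEτ]; field_simp
    have c2 : ((sylv g (j.val+1) : ℚ) + 2 * g) / (sylv g (j.val+1) : ℚ) * sP g n = sP g n + 2 * g * sE g n j.val := by
      rw [hEτ]; field_simp
    rw [c1, c2]
    by_cases h1 : i.val < n
    · simp only [if_pos h1]; push_cast; rfl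
    · by_cases h2 : i.val = n
      · simp only [if_neg h1, if_pos h2, if_pos (show i.val ≤ n + 1 by omega)]; push_cast; rfl
      · by_cases h3 : i.val = n + 1
        · simp only [if_neg h1, if_neg h2, if_pos h3, if_pos (show i.val ≤ n + 1 by omega)]; push_cast; rfl
        · simp only [if_neg h1, if_neg h2, if_neg h3, if_neg (show ¬ i.val ≤ n + 1 by omega)]; push_cast; ring
  · by_cases hjn2 : j.val = n
    · simp only [if_neg hjn, if_pos hjn2, hgt, if_pos (show j.val < n + 1 by omega), if_neg (show ¬ (j.val + 1 ≤ n) by omega),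
        if_neg (show ¬ (n + 1 ≤ n) by omega), wS]
      by_cases h1 : i.val < n
      · simp only [if_pos h1]; push_cast; rfl
      · by_cases h2 : i.val = n
        · simp only [if_neg h1, if_pos h2, if_pos (show i.val ≤ n + 1 by omega)]; push_cast; rfl
        · by_cases h3 : i.val = n + 1
          · simp only [if_neg h1, if_neg h2, if_pos h3, if_pos (show i.val ≤ n + 1 by omega)]; push_cast; rfl
          · simp only [if_neg h1, if_neg h2, if_neg h3, if_neg (show ¬ i.val ≤ n + 1 by omega)]; push_cast; ring
    · simp only [if_neg hjn, if_neg hjn2, if_neg (show ¬ (j.val < n + 1) by omega), wS]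
      by_cases h1 : i.val < n
      · simp only [if_pos h1]; push_cast; rfl
      · by_cases h2 : i.val = n
        · simp only [if_neg h1, if_pos h2, if_pos (show i.val ≤ n + 1 by omega)]; simp
        · by_cases h3 : i.val = n + 1
          · simp only [if_neg h1, if_neg h2, if_pos h3, if_pos (show i.val ≤ n + 1 by omega)]; push_cast; rfl
          · simp only [if_neg h1, if_neg h2, if_neg h3, if_neg (show ¬ i.val ≤ n + 1 by omega)]; push_cast; rfl

theorem exists_special (g n : ℕ) (hg : Odd g) :
    ∃ w : Fin (n + 2 + 1) → Fin (n + 2) → ℤ,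
      (∀ i j, (w i j : ℚ) = PgenMult g (n + 2) (aSpec g (n + 2)) i j) ∧
      IsFanoSimplex w ∧
      gorensteinIndex (fun i => toQ (w i)) = g ∧
      multOf w = 3 * g * sP g n * sP g n := by
  refine ⟨wS g n, entS g n hg.pos, (gdataS g n hg).fano, (gdataS g n hg).gor ⟨n+1, by omega⟩ ⟨n+1, by omega⟩ ?_, multS g n hg⟩
  simp [mS]

/-- For a Fano simplex of dimension `d` and Gorenstein index `g`,
with `(d,g)` not among `(3,1)`, `(3,2)`, `(4,1)`, one has
`mult(Δ) ≤ 3 t_{g,d-1}² / g`; if equality holds then `Δ` is isomorphic to one of the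
listed extremal matrices; moreover, for odd `g` the special choice of the `a_k`
yields a Fano simplex of dimension `d` and Gorenstein index `g` attaining the bound. -/
theorem mult_bound_general
    (d g : ℕ) (hd : 2 ≤ d) (hg : 1 ≤ g)
    (h31 : ¬(d = 3 ∧ g = 1)) (h32 : ¬(d = 3 ∧ g = 2)) (h41 : ¬(d = 4 ∧ g = 1))
    (v : Fin (d + 1) → Fin d → ℤ)
    (hFano : IsFanoSimplex v)
    (hGor : gorensteinIndex (fun i => toQ (v i)) = g) :
    ((multOf v : ℚ) ≤ 3 * (tsylv g (d - 1) : ℚ) ^ 2 / (g : ℚ)) ∧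
      ((multOf v : ℚ) = 3 * (tsylv g (d - 1) : ℚ) ^ 2 / (g : ℚ) →
        (d = 3 ∧ g = 3 ∧ IsIsomorphicToQ v (Pexc33 d)) ∨
          ∃ a : ℕ → ℤ, (∀ k, 1 ≤ k → k ≤ d - 1 → 1 ≤ a k) ∧
            IsIsomorphicToQ v (PgenMult g d fun k => (a k : ℚ))) ∧
      (Odd g →
        ∃ w : Fin (d + 1) → Fin d → ℤ,
          (∀ i j, (w i j : ℚ) = PgenMult g d (aSpec g d) i j) ∧
          IsFanoSimplex w ∧
          gorensteinIndex (fun i => toQ (w i)) = g ∧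
          (multOf w : ℚ) = 3 * (tsylv g (d - 1) : ℚ) ^ 2 / (g : ℚ)) := by
  obtain ⟨n, rfl⟩ : ∃ n, d = n + 2 := ⟨d - 2, by omega⟩
  have e1 : n + 2 - 1 = n + 1 := rfl
  have hgQ : (g:ℚ) ≠ 0 := by positivity
  have hval : 3 * (tsylv g (n + 2 - 1) : ℚ) ^ 2 / (g : ℚ) = ((3 * g * sP g n * sP g n : ℕ) : ℚ) := by
    rw [e1, tsylv_eq]; push_cast; field_simp
  obtain ⟨m, A, h⟩ := exists_data hg v hFano hGor
  obtain ⟨σ, hσ⟩ := exists_sorted A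
  have h' := h.perm σ
  obtain ⟨hb, heq⟩ := h'.bound_sorted hd hσ h31 h32 h41
  rw [multOf_perm] at hb heq
  refine ⟨hb, fun hE => ?_, fun hodd => ?_⟩
  · have hmult : multOf (v ∘ σ) = 3 * g * sP g n * sP g n := by
      rw [multOf_perm]
      rw [hval] at hE
      exact_mod_cast hE
    rcases heq hE with ⟨hA1, hA2⟩ | ⟨hd3, hg3, hA⟩
    · right
      have hA2' : ∀ i : Fin (n + 2 + 1), n ≤ i.val → (A ∘ σ) i = 3 * (g * sP g n) := by
        intro i hi
        rw [hA2 i (by omega), e1, tsylv_eq]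
      obtain ⟨a, ha, hiso⟩ := iso_main h' (fun i hi => hA1 i (by omega)) hA2' hmult
      exact ⟨a, ha, iso_perm hiso⟩
    · left
      obtain rfl : n = 1 := by omega
      subst hg3
      refine ⟨rfl, rfl, iso_perm (iso_exc h' hA ?_)⟩
      rw [hmult]
      simp [sP, sy, sylv]
  · obtain ⟨w, hw1, hw2, hw3, hw4⟩ := exists_special g n hodd
    refine ⟨w, hw1, hw2, hw3, ?_⟩
    rw [hval, hw4]
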